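/- (Scott) A countable collection S of subsets of ℕ is a Scott set if and only if S = SSy(M) for some countable non-standard model M of Peano arithmetic. -/

import Mathlib

open FirstOrder FirstOrder.Language

/-- Function symbols of the language of arithmetic: `0`, `1`, `+`, `·`. -/
inductive arithFunc : ℕ → Type
  | zero : arithFunc 0
  | one : arithFunc 0
  | add : arithFunc 2
  | mul : arithFunc 2
  deriving DecidableEq

/-- Relation symbols of the language of arithmetic: `<`. -/
inductive arithRel : ℕ → Type
  | lt : arithRel 2
  deriving DecidableEq

/-- The first-order language of arithmetic `{0, 1, +, ·, <}`. -/
def arith : FirstOrder.Language := ⟨arithFunc, arithRel⟩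

namespace Arith

variable {M : Type*} [arith.Structure M]

/-- The interpretation of `0`. -/
def zeroM (M : Type*) [arith.Structure M] : M :=
  Structure.funMap (L := arith) arithFunc.zero ![]

/-- The interpretation of `1`. -/
def oneM (M : Type*) [arith.Structure M] : M :=
  Structure.funMap (L := arith) arithFunc.one ![]

/-- The interpretation of `+`. -/
def addM (x y : M) : M := Structure.funMap (L := arith) arithFunc.add ![x, y]

/-- The interpretation of `·`. -/
def mulM (x y : M) : M := Structure.funMap (L := arith) arithFunc.mul ![x, y]

/-- The interpretation of `<`. -/
def ltM (x y : M) : Prop := Structure.RelMap (L := arith) arithRel.lt ![x, y]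

/-- Non-strict order. -/
def leM (x y : M) : Prop := ltM x y ∨ x = y

/-- The numeral `n` in `M`: `0`, or `1 + 1 + ⋯ + 1`. -/
def numeral (M : Type*) [arith.Structure M] : ℕ → M
  | 0 => zeroM M
  | n + 1 => addM (numeral M n) (oneM M)

/-- The standard `arith`-structure on `ℕ`. -/
instance : arith.Structure ℕ where
  funMap {n} f v :=
    match f with
    | .zero => 0
    | .one => 1
    | .add => v 0 + v 1
    | .mul => v 0 * v 1
  RelMap {n} r v :=
    match r with
    | .lt => v 0 < v 1

/-- `M` is a model of Peano arithmetic: it satisfies the finitely many basic axioms of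
`PA` together with induction for all parametrically definable sets (which is equivalent
to the usual first-order induction scheme). -/
def IsPAModel (M : Type*) [arith.Structure M] : Prop :=
  (∀ x : M, addM x (zeroM M) = x) ∧
  (∀ x y : M, addM x (addM y (oneM M)) = addM (addM x y) (oneM M)) ∧
  (∀ x : M, mulM x (zeroM M) = zeroM M) ∧
  (∀ x y : M, mulM x (addM y (oneM M)) = addM (mulM x y) x) ∧
  (∀ x : M, ¬ ltM x (zeroM M)) ∧
  (∀ x y : M, ltM x (addM y (oneM M)) ↔ (ltM x y ∨ x = y)) ∧
  (∀ x : M, addM x (oneM M) ≠ zeroM M) ∧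
  (∀ x y : M, addM x (oneM M) = addM y (oneM M) → x = y) ∧
  (∀ s : Set M, Set.Definable₁ (Set.univ : Set M) arith s →
    zeroM M ∈ s → (∀ x ∈ s, addM x (oneM M) ∈ s) → ∀ x : M, x ∈ s)

/-- An element of `M` is standard if it is a numeral. -/
def IsStd (x : M) : Prop := ∃ n : ℕ, x = numeral M n

/-- `M` is a non-standard model of `PA`: a model of `PA` not isomorphic to the standard
model `ℕ`. -/
def NonstandardModel (M : Type*) [arith.Structure M] : Prop :=
  IsPAModel M ∧ ¬ Nonempty (M ≃[arith] ℕ)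

/-- `(x)_i = 1`: the `i`-th binary digit of `x` is `1`, for standard `i`.  This is expressed
by saying that `x = u·2^(i+1) + (2^i + v)` with `v < 2^i`, where `2^i`, `2^(i+1)` are
numerals. -/
def digitB (x : M) (i : ℕ) : Prop :=
  ∃ u v : M, x = addM (mulM u (numeral M (2 ^ (i + 1)))) (addM (numeral M (2 ^ i)) v) ∧
    ltM v (numeral M (2 ^ i))

/-- The standard system of `M`: the collection of subsets of `ℕ` coded by some
non-standard element of `M` (via its standard binary digits). -/
def SSy (M : Type*) [arith.Structure M] : Set (Set ℕ) :=
  {X | ∃ a : M, ¬ IsStd a ∧ ∀ i : ℕ, i ∈ X ↔ digitB a i}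

/-- A function `M → M` is definable (with parameters) if its graph is a definable set. -/
def DefinableFun₁ (f : M → M) : Prop :=
  Set.Definable (Set.univ : Set M) arith {v : Fin 2 → M | f (v 0) = v 1}

/-- A `k`-ary function `M^k → M` is definable (with parameters) if its graph is a
definable set. -/
def DefinableFun {k : ℕ} (F : (Fin k → M) → M) : Prop :=
  Set.Definable (Set.univ : Set M) arith
    {v : Fin (k + 1) → M | F (fun i => v i.castSucc) = v (Fin.last k)}

/-- `c` is the internal cardinality of the set `D ⊆ M`: there is an `M`-definable
bijection between `{x : x < c}` and `D`. -/
def InternalCard (D : Set M) (c : M) : Prop :=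
  ∃ f : M → M, DefinableFun₁ f ∧ Set.BijOn f {x : M | ltM x c} D

/-- `y = 2^x` in the model `M`, expressed via the existence of a definable function
satisfying the recursion of the base-`2` exponential up to `x`. -/
def IsPow2 (x y : M) : Prop :=
  ∃ f : M → M, DefinableFun₁ f ∧ f (zeroM M) = oneM M ∧
    (∀ z : M, ltM z x → f (addM z (oneM M)) = addM (f z) (f z)) ∧ f x = y

end Arith

namespace Arith

/-- Relativized partial recursiveness: `RecursiveIn O f` means the partial function `f`
is partial recursive in the total oracle `O`.  This mirrors `Nat.Partrec`, with an extra
constructor for the oracle. -/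
inductive RecursiveIn (O : ℕ → ℕ) : (ℕ →. ℕ) → Prop
  | zero : RecursiveIn O (pure 0)
  | succ : RecursiveIn O Nat.succ
  | left : RecursiveIn O ↑fun n : ℕ => n.unpair.1
  | right : RecursiveIn O ↑fun n : ℕ => n.unpair.2
  | oracle : RecursiveIn O O
  | pair {f g} : RecursiveIn O f → RecursiveIn O g →
      RecursiveIn O fun n => Nat.pair <$> f n <*> g n
  | comp {f g} : RecursiveIn O f → RecursiveIn O g → RecursiveIn O fun n => g n >>= f
  | prec {f g} : RecursiveIn O f → RecursiveIn O g → RecursiveIn O (Nat.unpaired fun a n =>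
      n.rec (f a) fun y IH => do let i ← IH; g (Nat.pair a (Nat.pair y i)))
  | rfind {f} : RecursiveIn O f →
      RecursiveIn O fun a => Nat.rfind fun n => (fun m => m = 0) <$> f (Nat.pair a n)

open Classical in
/-- The characteristic function of a set of natural numbers. -/
noncomputable def charFn (X : Set ℕ) : ℕ → ℕ := fun n => if n ∈ X then 1 else 0

/-- Turing reducibility between sets of natural numbers. -/
def TuringLE (Y X : Set ℕ) : Prop := RecursiveIn (charFn X) (charFn Y)

/-- The Turing join `X ⊕ Y = 2X ∪ (2Y + 1)`. -/
def turingJoin (X Y : Set ℕ) : Set ℕ :=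
  {n | ∃ m ∈ X, n = 2 * m} ∪ {n | ∃ m ∈ Y, n = 2 * m + 1}

/-- A Turing ideal: a collection of subsets of `ℕ` closed under Turing join and Turing
reducibility. -/
def TuringIdeal (S : Set (Set ℕ)) : Prop :=
  (∀ X ∈ S, ∀ Y ∈ S, turingJoin X Y ∈ S) ∧
  (∀ X ∈ S, ∀ Y : Set ℕ, TuringLE Y X → Y ∈ S)

/-- The Turing ideal generated by a collection of subsets of `ℕ`. -/
def tIdealGen (C : Set (Set ℕ)) : Set (Set ℕ) :=
  ⋂₀ {I | TuringIdeal I ∧ C ⊆ I}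

/-- `T ⊆ ℕ` codes a binary tree: the set of finite binary sequences whose codes lie in
`T` is closed under initial segments. -/
def IsBinTreeSet (T : Set ℕ) : Prop :=
  ∀ s : List Bool, Encodable.encode s ∈ T → ∀ t : List Bool, t <+: s → Encodable.encode t ∈ T

/-- The tree coded by `T` is infinite. -/
def TreeInf (T : Set ℕ) : Prop := {s : List Bool | Encodable.encode s ∈ T}.Infinite

/-- `P ⊆ ℕ`, viewed as an infinite branch via its characteristic function, is a path
through the tree coded by `T`. -/
def PathThrough (P T : Set ℕ) : Prop :=
  ∀ f : ℕ → Bool, (∀ i : ℕ, f i = true ↔ i ∈ P) →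
    ∀ m : ℕ, Encodable.encode (List.ofFn fun i : Fin m => f i) ∈ T

/-- A Scott set: a nonempty Turing ideal such that every infinite binary tree in it has
an infinite path in it. -/
def ScottSet (S : Set (Set ℕ)) : Prop :=
  S.Nonempty ∧ TuringIdeal S ∧
  ∀ T ∈ S, IsBinTreeSet T → TreeInf T → ∃ P ∈ S, PathThrough P T

open Classical in
/-- The characteristic function of a set, with values in `Bool`. -/
noncomputable def chi (X : Set ℕ) : ℕ → Bool := fun n => if n ∈ X then true else false

/-- The iterated Turing join `⊕_{i<k} X i`. -/
def joinMany : {k : ℕ} → (Fin k → Set ℕ) → Set ℕ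
  | 0, _ => ∅
  | (k + 1), X => turingJoin (joinMany fun i => X i.castSucc) (X (Fin.last k))

end Arith

/-!
In a non-standard model `M` of Peano arithmetic, overspill turns the finite initial segments of a
definable set into an element whose standard digits are that set. Relations recursive in a coded
set are represented by definable relations, and an infinite binary tree coded in `M` has, again by
overspill, a branch of non-standard length, which restricts to a path.

Conversely, a Scott set `S` solves each of its propositional theories all of whose finite parts are
satisfiable. A Henkin construction over `S` produces a model in stages. The theory of stage `k`
says that the variables code a truth predicate for arithmetic with new elements: witnesses for
least counterexamples and a sequence of elements whose parities are the digits of the `k`-th set of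
`S`. A finite part of it is satisfied by interpreting the new elements in the model of the previous
stage, so a truth predicate for the stage lies in `S`. The limit is a countable model of Peano
arithmetic in which every set of `S` is coded. An element of the model has its iterated halves
among the witnesses of its own stage, so its digits are computable from the truth predicate of that
stage and lie in `S`.
-/

namespace Arith

/-! ### Relative computability -/

section RelativeComputability

variable {O f g : ℕ → ℕ}

theorem RecursiveIn.of_partrec {f : ℕ →. ℕ} (h : Nat.Partrec f) : RecursiveIn O f := by
  induction h with
  | zero => exact .zero
  | succ => exact .succ
  | left => exact .left
  | right => exact .right
  | pair _ _ hf hg => exact .pair hf hg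
  | comp _ _ hf hg => exact .comp hf hg
  | prec _ _ hf hg => exact .prec hf hg
  | rfind _ hf => exact .rfind hf

theorem RecursiveIn.of_primrec (h : Primrec f) : RecursiveIn O (f : ℕ →. ℕ) :=
  .of_partrec (Nat.Partrec.of_primrec (Primrec.nat_iff.1 h))

theorem RecursiveIn.of_eq {f g : ℕ →. ℕ} (hf : RecursiveIn O f) (H : ∀ n, f n = g n) :
    RecursiveIn O g :=
  (funext H : f = g) ▸ hf

theorem RecursiveIn.comp_total (hf : RecursiveIn O (f : ℕ →. ℕ))
    (hg : RecursiveIn O (g : ℕ →. ℕ)) : RecursiveIn O ((fun n => f (g n) : ℕ → ℕ) : ℕ →. ℕ) :=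
  (RecursiveIn.comp hf hg).of_eq fun n => Part.bind_some (g n) (f : ℕ →. ℕ)

theorem RecursiveIn.pair_total (hf : RecursiveIn O (f : ℕ →. ℕ))
    (hg : RecursiveIn O (g : ℕ →. ℕ)) :
    RecursiveIn O ((fun n => Nat.pair (f n) (g n) : ℕ → ℕ) : ℕ →. ℕ) :=
  (RecursiveIn.pair hf hg).of_eq fun n => by simp [Seq.seq]

/-- The list `[O (m - 1), …, O 0]` of the first `m` oracle answers, the latest one first, so that
it satisfies a primitive recursion in `O`. -/
def history (O : ℕ → ℕ) : ℕ → List ℕ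
  | 0 => []
  | m + 1 => O m :: history O m

theorem history_reverse (O : ℕ → ℕ) (m : ℕ) : (history O m).reverse = (List.range m).map O := by
  induction m with
  | zero => rfl
  | succ m ih => simp [history, ih, List.range_succ]

theorem recursiveIn_history (O : ℕ → ℕ) :
    RecursiveIn O ((fun m => Encodable.encode (history O m) : ℕ → ℕ) : ℕ →. ℕ) := by
  have hstep : RecursiveIn O
      ((fun n => Nat.succ (Nat.pair (O n.unpair.2.unpair.1) n.unpair.2.unpair.2) : ℕ → ℕ) :
        ℕ →. ℕ) := by
    have hsnd : Primrec fun n : ℕ => n.unpair.2.unpair :=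
      Primrec.unpair.comp (Primrec.snd.comp Primrec.unpair)
    refine RecursiveIn.comp_total (f := Nat.succ) .succ (RecursiveIn.pair_total ?_ ?_)
    · exact RecursiveIn.comp_total (f := O) .oracle (.of_primrec (Primrec.fst.comp hsnd))
    · exact .of_primrec (Primrec.snd.comp hsnd)
  have hrec := RecursiveIn.prec (RecursiveIn.of_primrec (O := O) (Primrec.const 0)) hstep
  have harg : RecursiveIn O ((fun m => Nat.pair 0 m : ℕ → ℕ) : ℕ →. ℕ) :=
    .of_primrec (Primrec₂.natPair.comp (Primrec.const 0) Primrec.id)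
  refine (RecursiveIn.comp hrec harg).of_eq fun m => ?_
  simp only [Nat.unpaired, PFun.coe_val, Part.bind_eq_bind, Part.bind_some, Nat.unpair_pair]
  induction m with
  | zero => simp [history]
  | succ m ih =>
    simpa [history] using
      congrArg (fun p : Part ℕ => p.bind fun i => Part.some (Nat.pair (O m) i + 1)) ih

end RelativeComputability

section TuringReducibility

variable {X Y : Set ℕ}

theorem charFn_eq_one {n : ℕ} : charFn X n = 1 ↔ n ∈ X := by
  simp [charFn]

theorem getD_map_range_charFn_eq_one {m n : ℕ} (h : n < m) :
    ((List.range m).map (charFn X)).getD n 0 = 1 ↔ n ∈ X := by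
  simp [List.getD, h, charFn_eq_one]

theorem turingLE_of_prefix {b : ℕ → ℕ} (hb : Primrec b) {F : ℕ → List ℕ → Prop}
    (hF : PrimrecRel F) (h : ∀ n, n ∈ Y ↔ F n ((List.range (b n)).map (charFn X))) :
    TuringLE Y X := by
  classical
  let G : ℕ → ℕ := fun p =>
    if F p.unpair.1 (Denumerable.ofNat (List ℕ) p.unpair.2).reverse then 1 else 0
  have hG : Primrec G := by
    refine Primrec.ite (hF.comp (Primrec.fst.comp Primrec.unpair) (Primrec.list_reverse.comp
      ((Primrec.ofNat (List ℕ)).comp (Primrec.snd.comp Primrec.unpair))))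
      (Primrec.const 1) (Primrec.const 0)
  refine ((RecursiveIn.of_primrec (O := charFn X) hG).comp_total
    ((RecursiveIn.of_primrec Primrec.id).pair_total
      ((recursiveIn_history (charFn X)).comp_total (RecursiveIn.of_primrec hb)))).of_eq fun n => ?_
  simp [G, charFn, h n, history_reverse]

theorem turingLE_of_query {g : ℕ → ℕ} (hg : Primrec g) {F : ℕ → ℕ → Prop} (hF : PrimrecRel F)
    (h : ∀ n, n ∈ Y ↔ F n (charFn X (g n))) : TuringLE Y X := by
  refine turingLE_of_prefix (b := fun n => g n + 1) (Primrec.succ.comp hg)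
    (F := fun n l => F n (l.getD (g n) 0)) ?_ fun n => ?_
  · exact hF.comp Primrec.fst ((Primrec.list_getD 0).comp Primrec.snd (hg.comp Primrec.fst))
  · simp [h n, List.getD]

theorem turingLE_preimage {g : ℕ → ℕ} (hg : Primrec g) : TuringLE (g ⁻¹' X) X :=
  turingLE_of_query hg (F := fun _ c => c = 1)
    (Primrec.eq.comp Primrec.snd (Primrec.const 1)) fun _ => charFn_eq_one.symm

theorem two_mul_mem_turingJoin {n : ℕ} : 2 * n ∈ turingJoin X Y ↔ n ∈ X := by
  constructor
  · rintro (⟨m, hm, h⟩ | ⟨m, -, h⟩)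
    · rwa [show n = m by omega]
    · omega
  · exact fun h => .inl ⟨n, h, rfl⟩

theorem two_mul_add_one_mem_turingJoin {n : ℕ} : 2 * n + 1 ∈ turingJoin X Y ↔ n ∈ Y := by
  constructor
  · rintro (⟨m, -, h⟩ | ⟨m, hm, h⟩)
    · omega
    · rwa [show n = m by omega]
  · exact fun h => .inr ⟨n, h, rfl⟩

theorem TuringIdeal.union_mem {S : Set (Set ℕ)} (hS : TuringIdeal S) (hX : X ∈ S) (hY : Y ∈ S) :
    X ∪ Y ∈ S := by
  refine hS.2 _ (hS.1 X hX Y hY) _ ?_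
  refine turingLE_of_prefix (b := fun n => 2 * n + 2) (Primrec.succ.comp Primrec.nat_double_succ)
    (F := fun n l => l.getD (2 * n) 0 = 1 ∨ l.getD (2 * n + 1) 0 = 1) ?_ fun n => ?_
  · exact PrimrecPred.or
      (Primrec.eq.comp ((Primrec.list_getD 0).comp Primrec.snd
        (Primrec.nat_double.comp Primrec.fst)) (Primrec.const 1))
      (Primrec.eq.comp ((Primrec.list_getD 0).comp Primrec.snd
        (Primrec.nat_double_succ.comp Primrec.fst)) (Primrec.const 1))
  · rw [getD_map_range_charFn_eq_one (by omega), getD_map_range_charFn_eq_one (by omega),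
      two_mul_mem_turingJoin, two_mul_add_one_mem_turingJoin, Set.mem_union]

end TuringReducibility

/-! ### Compactness inside a Scott set -/

section Compactness

/-- The truth assignment `v` satisfies the clause `c`, a disjunction of literals; a literal is a
pair `(p, b)` and asserts `v p = b`. -/
def Satisfies (v : ℕ → Bool) (c : List (ℕ × Bool)) : Prop := ∃ l ∈ c, v l.1 = l.2

/-- The truth assignment `v` obeys at `p` the unit constraints coded by `Z`, where the element
`2 * p + b` of `Z` imposes `v p = b`. -/
def MeetsUnit (v : ℕ → Bool) (Z : Set ℕ) (p : ℕ) : Prop := ∀ b, Nat.bit b p ∈ Z → v p = b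

/-- The literal `l` is false under the partial truth assignment given by a string of bits. -/
def Refutes (s : List Bool) (l : ℕ × Bool) : Prop := s[l.1]? = some (!l.2)

theorem Refutes.of_prefix {s t : List Bool} {l : ℕ × Bool} (hts : t <+: s) (h : Refutes t l) :
    Refutes s l := by
  obtain ⟨hl, -⟩ := List.getElem?_eq_some_iff.1 h
  rw [Refutes, ← h]
  exact (List.prefix_iff_getElem?.1 hts _ hl).trans (List.getElem?_eq_getElem hl).symm

theorem refutes_ofFn {m : ℕ} {v : ℕ → Bool} {l : ℕ × Bool} :
    Refutes (List.ofFn fun i : Fin m => v i) l ↔ l.1 < m ∧ v l.1 ≠ l.2 := by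
  simp [Refutes, Bool.eq_not]

theorem primrecRel_refutes : PrimrecRel Refutes :=
  Primrec.eq.comp (Primrec.list_getElem?.comp Primrec.fst (Primrec.fst.comp Primrec.snd))
    (Primrec.option_some.comp (Primrec.not.comp (Primrec.snd.comp Primrec.snd)))

theorem primrec₂_bit : Primrec₂ Nat.bit :=
  Primrec.cond Primrec.fst (Primrec.nat_double_succ.comp Primrec.snd)
    (Primrec.nat_double.comp Primrec.snd)

/-- The binary string with code `m`, empty if there is none. -/
def strOf (m : ℕ) : List Bool := (Encodable.decode m : Option (List Bool)).getD []

theorem strOf_encode (s : List Bool) : strOf (Encodable.encode s) = s := by simp [strOf]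

theorem primrec_strOf : Primrec strOf :=
  Primrec.option_getD.comp Primrec.decode (Primrec.const [])

variable {cl : ℕ → List (ℕ × Bool)} {Z : Set ℕ}

/-- The tree of partial assignments: a string of length `n` belongs to it if it refutes neither
one of the first `n` clauses nor a constraint of `Z` on one of the first `n` variables. -/
def clauseTree (cl : ℕ → List (ℕ × Bool)) (Z : Set ℕ) : Set ℕ :=
  {m | ∀ n < (strOf m).length, (∃ l ∈ cl n, ¬ Refutes (strOf m) l) ∧
    ∀ b, Nat.bit b n ∈ Z → ¬ Refutes (strOf m) (n, b)}

theorem encode_mem_clauseTree {s : List Bool} :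
    Encodable.encode s ∈ clauseTree cl Z ↔ ∀ n < s.length, (∃ l ∈ cl n, ¬ Refutes s l) ∧
      ∀ b, Nat.bit b n ∈ Z → ¬ Refutes s (n, b) := by
  simp only [clauseTree, Set.mem_ofPred_eq, strOf_encode]

theorem clauseTree_turingLE (hcl : Primrec cl) : TuringLE (clauseTree cl Z) Z := by
  refine turingLE_of_prefix (b := fun m => 2 * (strOf m).length)
    (Primrec.nat_double.comp (Primrec.list_length.comp primrec_strOf))
    (F := fun m h => ∀ n ∈ List.range (strOf m).length, (∃ l ∈ cl n, ¬ Refutes (strOf m) l) ∧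
      ∀ b ∈ [false, true], ¬ h.getD (Nat.bit b n) 0 = 1 ∨ ¬ Refutes (strOf m) (n, b)) ?_ ?_
  · have hclause : PrimrecRel fun (n : ℕ) (s : List Bool) => ∃ l ∈ cl n, ¬ Refutes s l :=
      (PrimrecRel.exists_mem_list (R := fun l s => ¬ Refutes s l)
        (primrecRel_refutes.comp Primrec.snd Primrec.fst).not).comp
        (hcl.comp Primrec.fst) Primrec.snd
    have hunit : PrimrecRel fun (b : Bool) (q : ℕ × ℕ × List ℕ) =>
        ¬ q.2.2.getD (Nat.bit b q.1) 0 = 1 ∨ ¬ Refutes (strOf q.2.1) (q.1, b) := by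
      have hn : Primrec fun x : Bool × ℕ × ℕ × List ℕ => x.2.1 := Primrec.fst.comp Primrec.snd
      have hmh : Primrec fun x : Bool × ℕ × ℕ × List ℕ => x.2.2 := Primrec.snd.comp Primrec.snd
      exact PrimrecPred.or
        (Primrec.eq.comp ((Primrec.list_getD 0).comp (Primrec.snd.comp hmh)
          (primrec₂_bit.comp Primrec.fst hn)) (Primrec.const 1)).not
        (primrecRel_refutes.comp (primrec_strOf.comp (Primrec.fst.comp hmh))
          (hn.pair Primrec.fst)).not
    have hnode : PrimrecRel fun (n : ℕ) (q : ℕ × List ℕ) =>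
        (∃ l ∈ cl n, ¬ Refutes (strOf q.1) l) ∧ ∀ b ∈ [false, true],
          ¬ q.2.getD (Nat.bit b n) 0 = 1 ∨ ¬ Refutes (strOf q.1) (n, b) :=
      PrimrecPred.and
        (hclause.comp Primrec.fst (primrec_strOf.comp (Primrec.fst.comp Primrec.snd)))
        (hunit.forall_mem_list.comp (Primrec.const _) Primrec.id)
    exact hnode.forall_mem_list.comp (Primrec.list_range.comp
      (Primrec.list_length.comp (primrec_strOf.comp Primrec.fst))) Primrec.id
  · intro m
    simp only [List.mem_range]
    refine forall₂_congr fun n hn => and_congr Iff.rfl ?_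
    have hbit : ∀ b, Nat.bit b n < 2 * (strOf m).length := by
      intro b
      cases b <;> simp only [Nat.bit_false, Nat.bit_true] <;> omega
    have hmem : ∀ b, b ∈ [false, true] := by decide
    simp only [getD_map_range_charFn_eq_one (hbit _), hmem, true_imp_iff]
    simp only [imp_iff_not_or]

theorem clauseTree_isBinTreeSet (cl : ℕ → List (ℕ × Bool)) (Z : Set ℕ) :
    IsBinTreeSet (clauseTree cl Z) := by
  intro s hs t hts
  rw [encode_mem_clauseTree] at hs ⊢
  intro n hn
  obtain ⟨⟨l, hl, hclause⟩, hunit⟩ := hs n (hn.trans_le hts.length_le)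
  exact ⟨⟨l, hl, fun h => hclause (h.of_prefix hts)⟩, fun b hb h => hunit b hb (h.of_prefix hts)⟩

theorem ofFn_mem_clauseTree {N : ℕ} {v : ℕ → Bool}
    (h : ∀ n < N, Satisfies v (cl n) ∧ MeetsUnit v Z n) :
    Encodable.encode (List.ofFn fun i : Fin N => v i) ∈ clauseTree cl Z := by
  rw [encode_mem_clauseTree]
  intro n hn
  obtain ⟨⟨l, hl, hclause⟩, hunit⟩ := h n (by simpa using hn)
  exact ⟨⟨l, hl, fun hr => (refutes_ofFn.1 hr).2 hclause⟩,
    fun b hb hr => (refutes_ofFn.1 hr).2 (hunit b hb)⟩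

theorem satisfies_of_ofFn_mem_clauseTree {v : ℕ → Bool}
    (h : ∀ N, Encodable.encode (List.ofFn fun i : Fin N => v i) ∈ clauseTree cl Z) (n : ℕ) :
    Satisfies v (cl n) ∧ MeetsUnit v Z n := by
  obtain ⟨N, hnN, hN⟩ : ∃ N, n < N ∧ ∀ l ∈ cl n, l.1 < N := by
    refine ⟨n + 1 + ((cl n).map Prod.fst).sum, by omega, fun l hl => ?_⟩
    have := List.single_le_sum (l := (cl n).map Prod.fst) (fun _ _ => Nat.zero_le _) l.1
      (List.mem_map_of_mem hl)
    omega
  obtain ⟨⟨l, hl, hclause⟩, hunit⟩ := encode_mem_clauseTree.1 (h N) n (by simpa using hnN)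
  simp only [refutes_ofFn, not_and, not_not] at hclause hunit
  exact ⟨⟨l, hl, hclause (hN l hl)⟩, fun b hb => hunit b hb hnN⟩

theorem ScottSet.exists_assignment {S : Set (Set ℕ)} (hS : ScottSet S) (hcl : Primrec cl)
    (hZ : Z ∈ S) (hfin : ∀ N, ∃ v : ℕ → Bool, ∀ n < N, Satisfies v (cl n) ∧ MeetsUnit v Z n) :
    ∃ P ∈ S, ∀ n, Satisfies (chi P) (cl n) ∧ MeetsUnit (chi P) Z n := by
  obtain ⟨-, ⟨-, hred⟩, htree⟩ := hS
  have hinf : TreeInf (clauseTree cl Z) := by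
    choose v hv using hfin
    refine Set.infinite_of_injective_forall_mem (f := fun N => List.ofFn fun i : Fin N => v N i)
      (fun a b hab => ?_) fun N => ofFn_mem_clauseTree (hv N)
    simpa using congrArg List.length hab
  obtain ⟨P, hP, hpath⟩ := htree _ (hred Z hZ _ (clauseTree_turingLE hcl))
    (clauseTree_isBinTreeSet cl Z) hinf
  exact ⟨P, hP, satisfies_of_ofFn_mem_clauseTree (hpath (chi P) (by simp [chi]))⟩

end Compactness

/-! ### Definable relations -/

section Definability

variable {M : Type*} [arith.Structure M]

/-- `f` maps an assignment of variables to the value of a term with parameters. The classes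
`TermFun` and `DefProp` let instance resolution prove definability by recursion on the expression
that defines a relation. -/
class TermFun (f : (ℕ → M) → M) : Prop where
  out : ∃ t : arith.Term (M ⊕ ℕ), ∀ v, t.realize (Sum.elim id v) = f v

/-- `P` is the property of assignments of variables expressed by a formula with parameters. -/
class DefProp (P : (ℕ → M) → Prop) : Prop where
  out : ∃ φ : arith.Formula (M ⊕ ℕ), ∀ v, φ.Realize (Sum.elim id v) ↔ P v

instance (c : M) : TermFun fun _ => c := ⟨Term.var (.inl c), fun _ => rfl⟩

instance (n : ℕ) : TermFun fun v : ℕ → M => v n := ⟨Term.var (.inr n), fun _ => rfl⟩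

theorem TermFun.funMap₂ (F : arith.Functions 2) {f g : (ℕ → M) → M} (hf : TermFun f)
    (hg : TermFun g) : TermFun fun v => Structure.funMap F ![f v, g v] := by
  obtain ⟨s, hs⟩ := hf.out
  obtain ⟨t, ht⟩ := hg.out
  refine ⟨Term.func F ![s, t], fun v => ?_⟩
  rw [← hs, ← ht]
  refine congrArg (Structure.funMap F) (funext fun i => ?_)
  fin_cases i <;> rfl

instance {f g : (ℕ → M) → M} [hf : TermFun f] [hg : TermFun g] :
    TermFun fun v => addM (f v) (g v) :=
  hf.funMap₂ arithFunc.add hg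

instance {f g : (ℕ → M) → M} [hf : TermFun f] [hg : TermFun g] :
    TermFun fun v => mulM (f v) (g v) :=
  hf.funMap₂ arithFunc.mul hg

instance (p : Prop) : DefProp fun _ : ℕ → M => p := by
  by_cases hp : p
  · exact ⟨⊤, fun v => by simp [hp, Formula.Realize]⟩
  · exact ⟨⊥, fun v => by simp [hp, Formula.Realize]⟩

instance {f g : (ℕ → M) → M} [hf : TermFun f] [hg : TermFun g] :
    DefProp fun v => f v = g v := by
  obtain ⟨s, hs⟩ := hf.out
  obtain ⟨t, ht⟩ := hg.out
  exact ⟨s.equal t, fun v => by rw [Formula.realize_equal, hs, ht]⟩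

instance {f g : (ℕ → M) → M} [hf : TermFun f] [hg : TermFun g] :
    DefProp fun v => ltM (f v) (g v) := by
  obtain ⟨s, hs⟩ := hf.out
  obtain ⟨t, ht⟩ := hg.out
  refine ⟨Relations.formula (L := arith) arithRel.lt ![s, t], fun v => ?_⟩
  refine Formula.realize_rel.trans ?_
  rw [← hs, ← ht]
  refine iff_of_eq (congrArg (Structure.RelMap (L := arith) arithRel.lt) (funext fun i => ?_))
  fin_cases i <;> rfl

instance {P Q : (ℕ → M) → Prop} [hP : DefProp P] [hQ : DefProp Q] :
    DefProp fun v => P v ∧ Q v := by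
  obtain ⟨φ, hφ⟩ := hP.out
  obtain ⟨ψ, hψ⟩ := hQ.out
  exact ⟨φ ⊓ ψ, fun v => by rw [Formula.realize_inf, hφ, hψ]⟩

instance {P Q : (ℕ → M) → Prop} [hP : DefProp P] [hQ : DefProp Q] :
    DefProp fun v => P v ∨ Q v := by
  obtain ⟨φ, hφ⟩ := hP.out
  obtain ⟨ψ, hψ⟩ := hQ.out
  exact ⟨φ ⊔ ψ, fun v => by rw [Formula.realize_sup, hφ, hψ]⟩

instance {P Q : (ℕ → M) → Prop} [hP : DefProp P] [hQ : DefProp Q] :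
    DefProp fun v => P v → Q v := by
  obtain ⟨φ, hφ⟩ := hP.out
  obtain ⟨ψ, hψ⟩ := hQ.out
  exact ⟨φ.imp ψ, fun v => by rw [Formula.realize_imp, hφ, hψ]⟩

instance {P : (ℕ → M) → Prop} [hP : DefProp P] : DefProp fun v => ¬ P v := by
  obtain ⟨φ, hφ⟩ := hP.out
  exact ⟨φ.not, fun v => by rw [Formula.realize_not, hφ]⟩

instance {f g : (ℕ → M) → M} [TermFun f] [TermFun g] : DefProp fun v => f v ≠ g v :=
  inferInstanceAs (DefProp fun v => ¬ f v = g v)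

instance {P Q : (ℕ → M) → Prop} [DefProp P] [DefProp Q] : DefProp fun v => P v ↔ Q v := by
  simp only [iff_def]
  infer_instance

theorem DefProp.subst {P : (ℕ → M) → Prop} (hP : DefProp P) (f : (ℕ → M) → ℕ → M)
    (hf : ∀ n, TermFun fun v => f v n) : DefProp fun v => P (f v) := by
  obtain ⟨φ, hφ⟩ := hP.out
  choose t ht using fun n => (hf n).out
  refine ⟨φ.subst (Sum.elim (fun c => Term.var (.inl c)) t), fun v => ?_⟩
  rw [Formula.Realize, BoundedFormula.realize_subst, ← hφ, Formula.Realize]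
  refine iff_of_eq (congrArg₂ _ (funext fun i => ?_) rfl)
  rcases i with c | n
  · rfl
  · exact ht n v

theorem DefProp.subst₄ {R : M → M → M → M → Prop}
    (hR : DefProp fun v => R (v 0) (v 1) (v 2) (v 3)) {f₀ f₁ f₂ f₃ : (ℕ → M) → M} [TermFun f₀]
    [TermFun f₁] [TermFun f₂] [TermFun f₃] :
    DefProp fun v => R (f₀ v) (f₁ v) (f₂ v) (f₃ v) := by
  refine hR.subst (fun v => fun
    | 0 => f₀ v
    | 1 => f₁ v
    | 2 => f₂ v
    | _ => f₃ v) fun n => ?_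
  match n with
  | 0 | 1 | 2 | _ + 3 => assumption

-- The bound variable becomes variable `0`, and the variables of the context move up by one.
instance {P : (ℕ → M) → M → Prop} [hP : DefProp fun v => P (fun i => v (i + 1)) (v 0)] :
    DefProp fun v => ∃ x, P v x := by
  obtain ⟨φ, hφ⟩ := hP.out
  let ψ : arith.BoundedFormula (M ⊕ ℕ) 1 := BoundedFormula.relabel (n := 1)
    (Sum.elim (fun c => .inl (.inl c)) fun n => Nat.casesOn n (.inr 0) fun n => .inl (.inr n)) φ
  refine ⟨ψ.ex, fun v => ?_⟩
  rw [Formula.Realize, BoundedFormula.realize_ex]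
  refine exists_congr fun x => Iff.trans ?_ (hφ (fun n => Nat.casesOn n x v))
  rw [BoundedFormula.realize_relabel, Formula.Realize]
  refine iff_of_eq (congrArg₂ _ (funext fun i => ?_) (Subsingleton.elim _ _))
  rcases i with c | _ | n <;> rfl

instance {P : (ℕ → M) → M → Prop} [hP : DefProp fun v => P (fun i => v (i + 1)) (v 0)] :
    DefProp fun v => ∀ x, P v x := by
  have h : DefProp fun v => ¬ ∃ x, ¬ P v x := inferInstance
  simpa only [not_exists, not_not] using h

/-- `D` is a unary relation definable with parameters. -/
class DefPred (D : M → Prop) : Prop where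
  out : DefProp fun v => D (v 0)

/-- `G` is a binary relation definable with parameters. -/
class DefRel (G : M → M → Prop) : Prop where
  out : DefProp fun v => G (v 0) (v 1)

instance (priority := low) {D : M → Prop} [hD : DefPred D] {f : (ℕ → M) → M} [hf : TermFun f] :
    DefProp fun v => D (f v) :=
  hD.out.subst (fun v _ => f v) fun _ => hf

instance (priority := low) {G : M → M → Prop} [hG : DefRel G] {f g : (ℕ → M) → M}
    [hf : TermFun f] [hg : TermFun g] : DefProp fun v => G (f v) (g v) :=
  hG.out.subst (fun v n => Nat.casesOn n (f v) fun _ => g v) fun n => by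
    cases n
    · exact hf
    · exact hg

theorem DefPred.definable {D : M → Prop} (hD : DefPred D) :
    Set.Definable₁ (Set.univ : Set M) arith {x | D x} := by
  obtain ⟨φ, hφ⟩ := hD.out.out
  refine Set.definable_iff_exists_formula_sum.2
    ⟨φ.relabel (Sum.map (fun c => ⟨c, trivial⟩) fun _ => 0), Set.ext fun x => ?_⟩
  refine Iff.trans (hφ fun _ => x 0).symm ?_
  rw [Set.mem_ofPred_eq, Formula.realize_relabel]
  refine iff_of_eq (congrArg _ (funext fun i => ?_))
  rcases i with c | n <;> rfl

end Definability

/-! ### Arithmetic in models of Peano arithmetic -/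

/-- The conditions of `IsPAModel` as a class with named fields, so that the algebraic and order
structure of a model can be found by instance resolution. -/
class PAModel (M : Type*) [arith.Structure M] : Prop where
  addM_zeroM : ∀ x : M, addM x (zeroM M) = x
  addM_succ : ∀ x y : M, addM x (addM y (oneM M)) = addM (addM x y) (oneM M)
  mulM_zeroM : ∀ x : M, mulM x (zeroM M) = zeroM M
  mulM_succ : ∀ x y : M, mulM x (addM y (oneM M)) = addM (mulM x y) x
  not_ltM_zeroM : ∀ x : M, ¬ ltM x (zeroM M)
  ltM_succ : ∀ x y : M, ltM x (addM y (oneM M)) ↔ ltM x y ∨ x = y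
  succ_ne_zeroM : ∀ x : M, addM x (oneM M) ≠ zeroM M
  succ_inj : ∀ x y : M, addM x (oneM M) = addM y (oneM M) → x = y
  mem_of_definable : ∀ s : Set M, Set.Definable₁ (Set.univ : Set M) arith s →
    zeroM M ∈ s → (∀ x ∈ s, addM x (oneM M) ∈ s) → ∀ x : M, x ∈ s

theorem IsPAModel.paModel {M : Type*} [arith.Structure M] (h : IsPAModel M) : PAModel M := by
  obtain ⟨h₁, h₂, h₃, h₄, h₅, h₆, h₇, h₈, h₉⟩ := h
  exact ⟨h₁, h₂, h₃, h₄, h₅, h₆, h₇, h₈, h₉⟩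

namespace PAModel

variable {M : Type*} [arith.Structure M] [PAModel M]

instance : Zero M := ⟨zeroM M⟩
instance : One M := ⟨oneM M⟩
instance : Add M := ⟨addM⟩
instance : Mul M := ⟨mulM⟩
instance : LT M := ⟨ltM⟩
instance : LE M := ⟨leM⟩

instance {f g : (ℕ → M) → M} [TermFun f] [TermFun g] : TermFun fun v => f v + g v :=
  inferInstanceAs (TermFun fun v => addM (f v) (g v))

instance {f g : (ℕ → M) → M} [TermFun f] [TermFun g] : TermFun fun v => f v * g v :=
  inferInstanceAs (TermFun fun v => mulM (f v) (g v))

instance {f g : (ℕ → M) → M} [TermFun f] [TermFun g] : DefProp fun v => f v < g v :=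
  inferInstanceAs (DefProp fun v => ltM (f v) (g v))

protected theorem induction (D : M → Prop) (zero : D 0) (succ : ∀ x, D x → D (x + 1)) (x : M)
    (hD : DefPred D := by exact ⟨inferInstance⟩) : D x :=
  mem_of_definable {x | D x} hD.definable zero succ x

protected theorem add_zero (x : M) : x + 0 = x := addM_zeroM x

protected theorem add_succ (x y : M) : x + (y + 1) = x + y + 1 := addM_succ x y

protected theorem mul_zero (x : M) : x * 0 = 0 := mulM_zeroM x

protected theorem mul_succ (x y : M) : x * (y + 1) = x * y + x := mulM_succ x y

protected theorem zero_add (x : M) : 0 + x = x :=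
  PAModel.induction (fun x : M => 0 + x = x) (PAModel.add_zero _)
    (fun x h => by rw [PAModel.add_succ, h]) x

protected theorem add_assoc (x y z : M) : x + y + z = x + (y + z) :=
  PAModel.induction (fun z => x + y + z = x + (y + z)) (by simp only [PAModel.add_zero])
    (fun z h => by simp only [PAModel.add_succ, h]) z

protected theorem one_add (x : M) : 1 + x = x + 1 :=
  PAModel.induction (fun x => 1 + x = x + 1) (by rw [PAModel.add_zero, PAModel.zero_add])
    (fun x h => by rw [PAModel.add_succ, h]) x

protected theorem add_comm (x y : M) : x + y = y + x :=
  PAModel.induction (fun y => x + y = y + x) (by rw [PAModel.add_zero, PAModel.zero_add])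
    (fun y h => by
      rw [PAModel.add_succ, h, PAModel.add_assoc, ← PAModel.one_add x, PAModel.add_assoc]) y

protected theorem mul_add (x y z : M) : x * (y + z) = x * y + x * z :=
  PAModel.induction (fun z => x * (y + z) = x * y + x * z)
    (by simp only [PAModel.add_zero, PAModel.mul_zero])
    (fun z h => by
      rw [PAModel.add_succ, PAModel.mul_succ, h, PAModel.mul_succ, PAModel.add_assoc]) z

protected theorem add_mul (x y z : M) : (x + y) * z = x * z + y * z :=
  PAModel.induction (fun z => (x + y) * z = x * z + y * z)
    (by simp only [PAModel.add_zero, PAModel.mul_zero])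
    (fun z h => by
      simp only [PAModel.mul_succ, h]
      rw [PAModel.add_assoc, PAModel.add_assoc, ← PAModel.add_assoc (y * z),
        PAModel.add_comm (y * z) x, PAModel.add_assoc]) z

protected theorem mul_one (x : M) : x * 1 = x := by
  rw [← PAModel.zero_add 1, PAModel.mul_succ, PAModel.mul_zero, PAModel.zero_add]

protected theorem zero_mul (x : M) : 0 * x = 0 :=
  PAModel.induction (fun x : M => 0 * x = 0) (PAModel.mul_zero _)
    (fun x h => by rw [PAModel.mul_succ, h, PAModel.add_zero]) x

protected theorem one_mul (x : M) : 1 * x = x :=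
  PAModel.induction (fun x => 1 * x = x) (PAModel.mul_zero _)
    (fun x h => by rw [PAModel.mul_succ, h]) x

protected theorem mul_comm (x y : M) : x * y = y * x :=
  PAModel.induction (fun y => x * y = y * x) (by rw [PAModel.mul_zero, PAModel.zero_mul])
    (fun y h => by rw [PAModel.mul_succ, PAModel.add_mul, h, PAModel.one_mul]) y

protected theorem mul_assoc (x y z : M) : x * y * z = x * (y * z) :=
  PAModel.induction (fun z => x * y * z = x * (y * z)) (by simp only [PAModel.mul_zero])
    (fun z h => by rw [PAModel.mul_succ, h, PAModel.mul_succ, PAModel.mul_add]) z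

noncomputable instance : CommSemiring M where
  add_assoc := PAModel.add_assoc
  add_comm := PAModel.add_comm
  zero_add := PAModel.zero_add
  add_zero := PAModel.add_zero
  mul_assoc := PAModel.mul_assoc
  mul_comm := PAModel.mul_comm
  one_mul := PAModel.one_mul
  mul_one := PAModel.mul_one
  zero_mul := PAModel.zero_mul
  mul_zero := PAModel.mul_zero
  left_distrib := PAModel.mul_add
  right_distrib := PAModel.add_mul
  nsmul := nsmulRec

protected theorem add_right_cancel {x y z : M} : x + z = y + z → x = y :=
  PAModel.induction (fun z => x + z = y + z → x = y) (fun h => by simpa only [add_zero] using h)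
    (fun z ih h => ih (succ_inj _ _ (by rwa [PAModel.add_succ, PAModel.add_succ] at h))) z

theorem eq_zero_or_eq_succ (x : M) : x = 0 ∨ ∃ y, x = y + 1 :=
  PAModel.induction (fun x : M => x = 0 ∨ ∃ y, x = y + 1) (Or.inl rfl)
    (fun y _ => Or.inr ⟨y, rfl⟩) x

theorem lt_iff_exists {x y : M} : x < y ↔ ∃ z, y = x + z + 1 := by
  refine PAModel.induction (fun y => x < y ↔ ∃ z, y = x + z + 1)
    ⟨fun h => (not_ltM_zeroM _ h).elim, fun ⟨z, h⟩ => (succ_ne_zeroM _ h.symm).elim⟩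
    (fun y ih => (ltM_succ x y).trans ⟨?_, ?_⟩) y
  · rintro (h | rfl)
    · obtain ⟨z, rfl⟩ := ih.1 h
      exact ⟨z + 1, by ring⟩
    · exact ⟨0, by rw [add_zero]⟩
  · rintro ⟨z, h⟩
    obtain rfl := succ_inj _ _ h
    rcases eq_zero_or_eq_succ z with rfl | ⟨w, rfl⟩
    · exact Or.inr (add_zero x).symm
    · exact Or.inl (ih.2 ⟨w, by ring⟩)

protected theorem lt_or_eq_or_gt (x y : M) : x < y ∨ x = y ∨ y < x := by
  refine PAModel.induction (fun y => x < y ∨ x = y ∨ y < x) ?_ (fun y ih => ?_) y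
  · rcases eq_zero_or_eq_succ x with rfl | ⟨w, rfl⟩
    · exact Or.inr (Or.inl rfl)
    · exact Or.inr (Or.inr (lt_iff_exists.2 ⟨w, by ring⟩))
  · rcases ih with h | h | h
    · exact Or.inl ((ltM_succ x y).2 (Or.inl h))
    · exact Or.inl ((ltM_succ x y).2 (Or.inr h))
    · obtain ⟨z, rfl⟩ := lt_iff_exists.1 h
      rcases eq_zero_or_eq_succ z with rfl | ⟨w, rfl⟩
      · exact Or.inr (Or.inl (by ring))
      · exact Or.inr (Or.inr (lt_iff_exists.2 ⟨w, by ring⟩))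

protected theorem lt_trans {x y z : M} (hxy : x < y) (hyz : y < z) : x < z := by
  obtain ⟨u, rfl⟩ := lt_iff_exists.1 hxy
  obtain ⟨w, rfl⟩ := lt_iff_exists.1 hyz
  exact lt_iff_exists.2 ⟨u + w + 1, by ring⟩

protected theorem lt_irrefl (x : M) : ¬ x < x := by
  intro h
  obtain ⟨z, h⟩ := lt_iff_exists.1 h
  refine succ_ne_zeroM z (PAModel.add_right_cancel (z := x) (?_ : z + 1 + x = 0 + x))
  rw [zero_add, add_comm, ← add_assoc, ← h]

noncomputable instance : LinearOrder M where
  le_refl x := Or.inr rfl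
  le_trans x y z := by
    rintro (h | rfl) (h' | rfl)
    · exact Or.inl (PAModel.lt_trans h h')
    · exact Or.inl h
    · exact Or.inl h'
    · exact Or.inr rfl
  lt_iff_le_not_ge x y := by
    refine ⟨fun h => ⟨Or.inl h, ?_⟩, fun ⟨h, h'⟩ => h.resolve_right fun e => h' (Or.inr e.symm)⟩
    rintro (h' | rfl)
    · exact PAModel.lt_irrefl x (PAModel.lt_trans h h')
    · exact PAModel.lt_irrefl _ h
  le_antisymm x y h h' := by
    rcases h, h' with ⟨h | rfl, h' | h'⟩
    · exact (PAModel.lt_irrefl x (PAModel.lt_trans h h')).elim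
    · exact h'.symm
    · rfl
    · rfl
  le_total x y := by
    rcases PAModel.lt_or_eq_or_gt x y with h | h | h
    · exact Or.inl (Or.inl h)
    · exact Or.inl (Or.inr h)
    · exact Or.inr (Or.inl h)
  toDecidableLE := Classical.decRel _

protected theorem lt_add_one_iff {x y : M} : x < y + 1 ↔ x ≤ y := ltM_succ x y

protected theorem le_iff_exists {x y : M} : x ≤ y ↔ ∃ z, y = x + z := by
  rw [← PAModel.lt_add_one_iff, lt_iff_exists]
  exact exists_congr fun z => ⟨PAModel.add_right_cancel, fun h => by rw [h]⟩

instance : CanonicallyOrderedAdd M where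
  le_self_add x y := PAModel.le_iff_exists.2 ⟨y, rfl⟩
  le_add_self x y := PAModel.le_iff_exists.2 ⟨y, by ring⟩
  exists_add_of_le h := PAModel.le_iff_exists.1 h

instance : IsOrderedCancelAddMonoid M where
  add_le_add_left x y h z := by
    obtain ⟨w, rfl⟩ := PAModel.le_iff_exists.1 h
    exact PAModel.le_iff_exists.2 ⟨w, by ring⟩
  le_of_add_le_add_left x y z h := by
    obtain ⟨w, h⟩ := PAModel.le_iff_exists.1 h
    refine PAModel.le_iff_exists.2 ⟨w, PAModel.add_right_cancel (z := x) ?_⟩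
    rw [add_comm z, h]
    ring

instance : Nontrivial M :=
  ⟨⟨(0 : M) + 1, 0, succ_ne_zeroM (0 : M)⟩⟩

protected theorem mul_lt_mul_left {x y z : M} (hx : 0 < x) (h : y < z) : x * y < x * z := by
  obtain ⟨u, rfl⟩ := lt_iff_exists.1 hx
  obtain ⟨w, rfl⟩ := lt_iff_exists.1 h
  exact lt_iff_exists.2 ⟨u * w + u + w, by ring⟩

instance : IsStrictOrderedRing M where
  zero_le_one := zero_le
  mul_lt_mul_of_pos_left x hx y z h := PAModel.mul_lt_mul_left hx h
  mul_lt_mul_of_pos_right x hx y z h := by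
    rw [mul_comm y, mul_comm z]
    exact PAModel.mul_lt_mul_left hx h

protected theorem add_one_le_iff {x y : M} : x + 1 ≤ y ↔ x < y := by
  rw [← not_lt, PAModel.lt_add_one_iff, not_le]

theorem div_mod_unique {m q r q' r' : M} (hr : r < m) (hr' : r' < m)
    (h : q * m + r = q' * m + r') : q = q' ∧ r = r' := by
  have key : ∀ {q r q' r' : M}, r < m → q * m + r = q' * m + r' → q' ≤ q := by
    intro q r q' r' hr h
    by_contra! hq
    obtain ⟨z, rfl⟩ := lt_iff_exists.1 hq
    refine absurd h (ne_of_lt ?_)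
    calc q * m + r < q * m + m := by gcongr
      _ ≤ q * m + m + (z * m + r') := le_self_add
      _ = (q + z + 1) * m + r' := by ring
  obtain rfl := le_antisymm (key hr' h.symm) (key hr h)
  exact ⟨rfl, add_left_cancel h⟩

theorem numeral_eq_cast (n : ℕ) : numeral M n = n := by
  induction n with
  | zero => exact Nat.cast_zero.symm
  | succ n ih =>
    rw [Nat.cast_succ, ← ih]
    rfl

theorem exists_cast_of_lt {x : M} {n : ℕ} (h : x < n) : ∃ k < n, x = (k : M) := by
  induction n with
  | zero => exact (not_ltM_zeroM x (by rwa [Nat.cast_zero] at h)).elim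
  | succ n ih =>
    rw [Nat.cast_succ, PAModel.lt_add_one_iff, le_iff_lt_or_eq] at h
    rcases h with h | h
    · obtain ⟨k, hk, e⟩ := ih h
      exact ⟨k, hk.trans (Nat.lt_succ_self n), e⟩
    · exact ⟨n, Nat.lt_succ_self n, h⟩

theorem exists_cast_of_le {x : M} {n : ℕ} (h : x ≤ n) : ∃ k ≤ n, x = (k : M) := by
  rw [← PAModel.lt_add_one_iff, ← Nat.cast_succ] at h
  obtain ⟨k, hk, e⟩ := exists_cast_of_lt h
  exact ⟨k, Nat.le_of_lt_succ hk, e⟩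

theorem isStd_iff {x : M} : IsStd x ↔ ∃ n : ℕ, x = n := by
  simp only [IsStd, numeral_eq_cast]

theorem cast_lt_of_not_isStd {x : M} (h : ¬ IsStd x) (n : ℕ) : (n : M) < x := by
  by_contra! hle
  obtain ⟨k, -, e⟩ := exists_cast_of_le hle
  exact h (isStd_iff.2 ⟨k, e⟩)

theorem overspill {a : M} (ha : ¬ IsStd a) {D : M → Prop} (hD : DefPred D) (h : ∀ n : ℕ, D n) :
    ∃ x, ¬ IsStd x ∧ D x := by
  by_contra! hc
  have hbounded : ∀ x : M, D x ∧ x < a := by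
    refine PAModel.induction (fun x => D x ∧ x < a)
      ⟨by simpa using h 0, by simpa using cast_lt_of_not_isStd ha 0⟩ (fun x hx => ?_)
    obtain ⟨n, rfl⟩ := isStd_iff.1 (not_imp_comm.1 (hc x) (not_not.2 hx.1))
    exact ⟨by simpa using h (n + 1), by simpa using cast_lt_of_not_isStd ha (n + 1)⟩
  exact lt_irrefl a (hbounded a).2

end PAModel

/-! ### Binary digits -/

section Digits

/-- `y = 2 * z + b`, where the last digit `b` of `y` is `1` if `p` holds and `0` otherwise. -/
def DigitStep {R : Type*} [Semiring R] (p : Prop) (y z : R) : Prop :=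
  p ∧ y = 2 * z + 1 ∨ ¬ p ∧ y = 2 * z

theorem DigitStep.eq_iff {R : Type*} [Semiring R] {p : Prop} [Decidable p] {y z : R} :
    DigitStep p y z ↔ y = 2 * z + (if p then 1 else 0 : ℕ) := by
  by_cases hp : p <;> simp [DigitStep, hp]

theorem exists_digits (n : ℕ) (X : Set ℕ) :
    ∃ s : ℕ → ℕ, (∀ i, s i ≠ 0) ∧ ∀ i < n, DigitStep (i ∈ X) (s i) (s (i + 1)) := by
  classical
  induction n generalizing X with
  | zero => exact ⟨fun _ => 1, by simp, by simp⟩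
  | succ n ih =>
    obtain ⟨s, hne, hs⟩ := ih {i | i + 1 ∈ X}
    refine ⟨fun i => Nat.casesOn i (2 * s 0 + if 0 ∈ X then 1 else 0) s, fun i => ?_,
      fun i hi => ?_⟩
    · cases i with
      | zero => exact (Nat.add_pos_left (Nat.mul_pos two_pos (Nat.pos_of_ne_zero (hne 0))) _).ne'
      | succ i => exact hne i
    · cases i with
      | zero => exact DigitStep.eq_iff.2 rfl
      | succ i => exact hs i (Nat.lt_of_succ_lt_succ hi)

variable {M : Type*} [arith.Structure M] [PAModel M]

open PAModel

theorem digitStep_cast {p : Prop} {y z : ℕ} :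
    DigitStep p (y : M) (z : M) ↔ DigitStep p y z := by
  classical
  rw [DigitStep.eq_iff, DigitStep.eq_iff]
  norm_cast

instance {p : (ℕ → M) → Prop} {y z : (ℕ → M) → M} [DefProp p] [TermFun y] [TermFun z] :
    DefProp fun v => DigitStep (p v) (y v) (z v) := by
  unfold DigitStep
  infer_instance

variable {q : ℕ → M} {X : Set ℕ}

theorem exists_eq_mul_two_pow_add (h : ∀ i, DigitStep (i ∈ X) (q i) (q (i + 1))) (i : ℕ) :
    ∃ r : ℕ, r < 2 ^ i ∧ q 0 = q i * (2 ^ i : ℕ) + r := by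
  induction i with
  | zero => exact ⟨0, by simp, by simp⟩
  | succ i ih =>
    obtain ⟨r, hr, e⟩ := ih
    rcases h i with ⟨-, hi⟩ | ⟨-, hi⟩
    · refine ⟨2 ^ i + r, by rw [pow_succ]; omega, ?_⟩
      rw [e, hi]
      push_cast
      ring
    · refine ⟨r, by rw [pow_succ]; omega, ?_⟩
      rw [e, hi]
      push_cast
      ring

theorem digitB_iff {x : M} {i : ℕ} : digitB x i ↔
    ∃ u v : M, x = u * (2 ^ (i + 1) : ℕ) + ((2 ^ i : ℕ) + v) ∧ v < (2 ^ i : ℕ) := by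
  simp only [digitB, numeral_eq_cast]
  rfl

theorem digitB_iff_mem (h : ∀ i, DigitStep (i ∈ X) (q i) (q (i + 1))) (i : ℕ) :
    digitB (q 0) i ↔ i ∈ X := by
  rw [digitB_iff]
  obtain ⟨r, hr, e⟩ := exists_eq_mul_two_pow_add h i
  rcases h i with ⟨hX, hi⟩ | ⟨hX, hi⟩
  · refine iff_of_true ⟨q (i + 1), r, ?_, by exact_mod_cast hr⟩ hX
    rw [e, hi]
    push_cast
    ring
  · refine iff_of_false ?_ hX
    rintro ⟨u, v, e', hv⟩
    obtain ⟨v, hv', rfl⟩ := exists_cast_of_lt hv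
    have heq : q (i + 1) * (2 ^ (i + 1) : ℕ) + r =
        u * (2 ^ (i + 1) : ℕ) + ((2 ^ i + v : ℕ) : M) := by
      rw [hi] at e
      push_cast at e e' ⊢
      rw [← e', e]
      ring
    have hr' : r < 2 ^ (i + 1) := by rw [pow_succ]; omega
    have hv'' : 2 ^ i + v < 2 ^ (i + 1) := by rw [pow_succ]; omega
    have hrem : r = 2 ^ i + v := by
      exact_mod_cast (div_mod_unique (by exact_mod_cast hr') (by exact_mod_cast hv'') heq).2
    omega

theorem not_isStd_of_digits (h : ∀ i, DigitStep (i ∈ X) (q i) (q (i + 1))) (hne : ∀ i, q i ≠ 0) :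
    ¬ IsStd (q 0) := by
  rw [isStd_iff]
  rintro ⟨n, hn⟩
  obtain ⟨r, -, e⟩ := exists_eq_mul_two_pow_add h n
  have hone : (1 : M) ≤ q n := by
    simpa only [zero_add] using PAModel.add_one_le_iff.2 (pos_iff_ne_zero.2 (hne n))
  refine lt_irrefl (n : M) ?_
  calc (n : M) < (2 ^ n : ℕ) := by exact_mod_cast Nat.lt_two_pow_self
    _ ≤ q n * (2 ^ n : ℕ) := le_mul_of_one_le_left zero_le hone
    _ ≤ q n * (2 ^ n : ℕ) + r := le_self_add
    _ = n := by rw [← e, hn]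

theorem mem_SSy_of_digits (h : ∀ i, DigitStep (i ∈ X) (q i) (q (i + 1))) (hne : ∀ i, q i ≠ 0) :
    X ∈ SSy M :=
  ⟨q 0, not_isStd_of_digits h hne, fun i => (digitB_iff_mem h i).symm⟩

end Digits

/-! ### Coding of pairs and sequences -/

section Coding

variable {M : Type*} [arith.Structure M] [PAModel M]

open PAModel

/-- Gödel's `β` function: `y` is the `i`-th entry of the sequence coded by `c` and `d`, the
remainder of `c` modulo `(i + 1) * d + 1`. -/
def Entry (c d i y : M) : Prop :=
  ∃ q, c = q * ((i + 1) * d + 1) + y ∧ y < (i + 1) * d + 1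

instance {c d i y : (ℕ → M) → M} [TermFun c] [TermFun d] [TermFun i] [TermFun y] :
    DefProp fun v => Entry (c v) (d v) (i v) (y v) :=
  DefProp.subst₄ (by unfold Entry; infer_instance)

theorem Entry.unique {c d i y y' : M} (h : Entry c d i y) (h' : Entry c d i y') : y = y' := by
  obtain ⟨q, hq, hy⟩ := h
  obtain ⟨q', hq', hy'⟩ := h'
  exact (div_mod_unique hy hy' (hq.symm.trans hq')).2

theorem exists_entry (s : ℕ → ℕ) (n : ℕ) :
    ∃ c d : M, ∀ i < n, Entry c d i (s i) := by
  let l := List.ofFn fun i : Fin n => s i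
  let c := (Nat.unbeta l).unpair.1
  let d := (Nat.unbeta l).unpair.2
  refine ⟨c, d, fun i hi => ?_⟩
  have hmod : c % ((i + 1) * d + 1) = s i := by
    have hbeta : (Nat.unbeta l).beta i = s i := by
      simpa [l] using Nat.beta_unbeta_coe l ⟨i, by simpa [l] using hi⟩
    rwa [Nat.beta] at hbeta
  have hdiv := Nat.div_add_mod' c ((i + 1) * d + 1)
  have hlt := Nat.mod_lt c (Nat.succ_pos ((i + 1) * d))
  rw [hmod] at hdiv
  rw [Nat.succ_eq_add_one, hmod] at hlt
  exact ⟨(c / ((i + 1) * d + 1) : ℕ), by exact_mod_cast hdiv.symm, by exact_mod_cast hlt⟩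

/-- `z` is the code of the pair of `x` and `y`, following the definition of `Nat.pair`. -/
def IsPair (x y z : M) : Prop := x < y ∧ z = y * y + x ∨ ¬ x < y ∧ z = x * x + x + y

instance {x y z : (ℕ → M) → M} [TermFun x] [TermFun y] [TermFun z] :
    DefProp fun v => IsPair (x v) (y v) (z v) := by
  unfold IsPair
  infer_instance

theorem isPair_cast {x y : ℕ} {z : M} : IsPair (x : M) y z ↔ z = (Nat.pair x y : ℕ) := by
  unfold IsPair Nat.pair
  by_cases h : x < y <;> simp [h]

theorem IsPair.le {x y z : M} (h : IsPair x y z) : x ≤ z ∧ y ≤ z := by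
  rcases h with ⟨hlt, rfl⟩ | ⟨-, rfl⟩
  · have hy : 1 ≤ y := by simpa only [zero_add] using PAModel.add_one_le_iff.2 (pos_of_gt hlt)
    exact ⟨le_add_self, le_add_of_le_of_nonneg (le_mul_of_one_le_left zero_le hy) zero_le⟩
  · exact ⟨le_add_of_le_of_nonneg le_add_self zero_le, le_add_self⟩

theorem isPair_cast_right {x y : M} {n : ℕ} :
    IsPair x y (n : M) ↔ x = (n.unpair.1 : ℕ) ∧ y = (n.unpair.2 : ℕ) := by
  constructor
  · intro h
    obtain ⟨a, -, rfl⟩ := exists_cast_of_le h.le.1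
    obtain ⟨b, -, rfl⟩ := exists_cast_of_le h.le.2
    rw [isPair_cast, Nat.cast_inj] at h
    rw [h, Nat.unpair_pair]
    exact ⟨rfl, rfl⟩
  · rintro ⟨rfl, rfl⟩
    rw [isPair_cast, Nat.pair_unpair]

end Coding

/-! ### Representability of relatively recursive functions -/

section Representability

variable {M : Type*} [arith.Structure M] [PAModel M]

open PAModel

/-- `G` represents the partial function `f`: the value of `f` at an argument of its domain is the
unique element of `M` related to that argument. -/
def Represents (G : M → M → Prop) (f : ℕ →. ℕ) : Prop :=
  ∀ n m : ℕ, m ∈ f n → ∀ y : M, G n y ↔ y = m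

theorem represents_left : Represents (fun x y : M => ∃ z, IsPair y z x)
    (fun n : ℕ => n.unpair.1 : ℕ → ℕ) := by
  intro n m h y
  obtain rfl := Part.mem_some_iff.1 h
  simp [isPair_cast_right]

theorem represents_right : Represents (fun x y : M => ∃ z, IsPair z y x)
    (fun n : ℕ => n.unpair.2 : ℕ → ℕ) := by
  intro n m h y
  obtain rfl := Part.mem_some_iff.1 h
  simp [isPair_cast_right]

theorem represents_charFn {X : Set ℕ} {D : M → Prop} (hD : ∀ n : ℕ, D n ↔ n ∈ X) :
    Represents (fun x y : M => D x ∧ y = 1 ∨ ¬ D x ∧ y = 0) (charFn X : ℕ → ℕ) := by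
  intro n m h y
  obtain rfl := Part.mem_some_iff.1 h
  by_cases hn : n ∈ X <;> simp [hD, hn, charFn]

variable {F G : M → M → Prop} {f g : ℕ →. ℕ}

theorem Represents.pair (hF : Represents F f) (hG : Represents G g) :
    Represents (fun x y => ∃ a b, F x a ∧ G x b ∧ IsPair a b y)
      fun n => Nat.pair <$> f n <*> g n := by
  intro n m h y
  simp only [Seq.seq, Part.mem_bind_iff, Part.map_eq_map, Part.mem_map_iff] at h
  obtain ⟨_, ⟨a, ha, rfl⟩, b, hb, rfl⟩ := h
  simp [hF n a ha, hG n b hb, isPair_cast]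

theorem Represents.comp (hF : Represents F f) (hG : Represents G g) :
    Represents (fun x y => ∃ z, G x z ∧ F z y) fun n => g n >>= f := by
  intro n m h y
  obtain ⟨k, hk, hm⟩ := Part.mem_bind_iff.1 h
  simp [hG n k hk, hF k m hm]

/-- `w` is the value of the step function represented by `G` at the parameter `a`, the stage `j`
and the preceding value `u`. -/
def RecStep (G : M → M → Prop) (a j u w : M) : Prop :=
  ∃ p r, IsPair j u p ∧ IsPair a p r ∧ G r w

instance [DefRel G] {a j u w : (ℕ → M) → M} [TermFun a] [TermFun j] [TermFun u] [TermFun w] :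
    DefProp fun v => RecStep G (a v) (j v) (u v) (w v) :=
  DefProp.subst₄ (by unfold RecStep; infer_instance)

theorem Represents.recStep (hG : Represents G g) {a j u m : ℕ}
    (h : m ∈ g (Nat.pair a (Nat.pair j u))) (w : M) : RecStep G (a : M) j u w ↔ w = m := by
  simp [RecStep, isPair_cast, hG _ _ h]

/-- `c` and `d` code the sequence of the first `k + 1` values of the function with parameter `a`
defined by primitive recursion from `F` and `G`. -/
def CodesRec (F G : M → M → Prop) (a k c d : M) : Prop :=
  (∃ z, Entry c d 0 z ∧ F a z) ∧
    ∀ j, j < k → ∃ u w, Entry c d j u ∧ Entry c d (j + 1) w ∧ RecStep G a j u w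

instance [DefRel F] [DefRel G] {a k c d : (ℕ → M) → M} [TermFun a] [TermFun k] [TermFun c]
    [TermFun d] : DefProp fun v => CodesRec F G (a v) (k v) (c v) (d v) :=
  DefProp.subst₄ (by unfold CodesRec; infer_instance)

theorem exists_course_of_values {a k m : ℕ} (h : m ∈ (Nat.rec (f a)
      (fun y IH => IH.bind fun i => g (Nat.pair a (Nat.pair y i))) k : Part ℕ)) :
    ∃ s : ℕ → ℕ, s 0 ∈ f a ∧
      (∀ j < k, s (j + 1) ∈ g (Nat.pair a (Nat.pair j (s j)))) ∧ s k = m := by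
  induction k generalizing m with
  | zero => exact ⟨fun _ => m, h, by simp, rfl⟩
  | succ k ih =>
    obtain ⟨i, hi, hm⟩ := Part.mem_bind_iff.1 h
    obtain ⟨s, h0, hs, rfl⟩ := ih hi
    refine ⟨fun j => if j = k + 1 then m else s j, by simpa using h0, fun j hj => ?_, by simp⟩
    rcases Nat.lt_succ_iff_lt_or_eq.1 hj with hj | rfl
    · simpa [hj.ne, (hj.trans (Nat.lt_succ_self k)).ne] using hs j hj
    · simpa using hm

theorem Represents.entry_of_codesRec (hF : Represents F f) (hG : Represents G g) {a k : ℕ}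
    {s : ℕ → ℕ} (h0 : s 0 ∈ f a) (hs : ∀ j < k, s (j + 1) ∈ g (Nat.pair a (Nat.pair j (s j))))
    {c d : M} (h : CodesRec F G a k c d) : ∀ j ≤ k, Entry c d (j : M) (s j)
  | 0, _ => by
    obtain ⟨⟨z, hz, hFz⟩, -⟩ := h
    rw [hF _ _ h0] at hFz
    simpa [hFz] using hz
  | j + 1, hj => by
    obtain ⟨u, w, hu, hw, hstep⟩ := h.2 j (by exact_mod_cast hj)
    obtain rfl := hu.unique (hF.entry_of_codesRec hG h0 hs h j (Nat.le_of_succ_le hj))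
    rw [hG.recStep (hs j hj)] at hstep
    simpa [hstep] using hw

theorem Represents.exists_codesRec (hF : Represents F f) (hG : Represents G g) {a k : ℕ}
    {s : ℕ → ℕ} (h0 : s 0 ∈ f a) (hs : ∀ j < k, s (j + 1) ∈ g (Nat.pair a (Nat.pair j (s j)))) :
    ∃ c d : M, CodesRec F G a k c d ∧ Entry c d k (s k) := by
  obtain ⟨c, d, hcd⟩ := exists_entry (M := M) s (k + 1)
  refine ⟨c, d, ⟨⟨s 0, by simpa using hcd 0 (Nat.succ_pos k), (hF _ _ h0 _).2 rfl⟩,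
    fun j hj => ?_⟩, hcd k (Nat.lt_succ_self k)⟩
  obtain ⟨j, hjk, rfl⟩ := exists_cast_of_lt hj
  exact ⟨s j, s (j + 1), hcd j (hjk.trans (Nat.lt_succ_self k)),
    by simpa using hcd (j + 1) (Nat.succ_lt_succ hjk), (hG.recStep (hs j hjk) _).2 rfl⟩

theorem Represents.prec (hF : Represents F f) (hG : Represents G g) :
    Represents (fun x y => ∃ a k, IsPair a k x ∧ ∃ c d, CodesRec F G a k c d ∧ Entry c d k y)
      (Nat.unpaired fun a n => n.rec (f a) fun y IH => do
        let i ← IH; g (Nat.pair a (Nat.pair y i))) := by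
  intro n m h y
  obtain ⟨s, h0, hs, rfl⟩ := exists_course_of_values h
  simp only [isPair_cast_right]
  constructor
  · rintro ⟨_, _, ⟨rfl, rfl⟩, c, d, hcd, hy⟩
    exact hy.unique (hF.entry_of_codesRec hG h0 hs hcd _ le_rfl)
  · rintro rfl
    exact ⟨_, _, ⟨rfl, rfl⟩, hF.exists_codesRec hG h0 hs⟩

theorem Represents.rfind (hF : Represents F f) :
    Represents (fun x y => (∃ p, IsPair x y p ∧ F p 0) ∧
        ∀ j, j < y → ∃ p z, IsPair x j p ∧ z ≠ 0 ∧ F p z)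
      fun a => Nat.rfind fun n => (fun m => m = 0) <$> f (Nat.pair a n) := by
  intro n m h y
  obtain ⟨hzero, hlt⟩ := Nat.mem_rfind.1 h
  obtain ⟨z, hz, hz0⟩ := (Part.mem_map_iff _).1 hzero
  obtain rfl : z = 0 := by simpa using hz0
  have hlt' : ∀ j < m, ∃ z ≠ 0, z ∈ f (Nat.pair n j) := fun j hj => by
    obtain ⟨z, hz, hz0⟩ := (Part.mem_map_iff _).1 (hlt hj)
    exact ⟨z, by simpa using hz0, hz⟩
  constructor
  · rintro ⟨⟨p, hp, hp0⟩, hy⟩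
    rcases lt_trichotomy y m with h | h | h
    · obtain ⟨j, hj, rfl⟩ := exists_cast_of_lt h
      obtain ⟨z, hz, hz'⟩ := hlt' j hj
      rw [isPair_cast.1 hp, hF _ _ hz'] at hp0
      exact (hz (by exact_mod_cast hp0.symm)).elim
    · exact h
    · obtain ⟨p, z, hp, hz', hFz⟩ := hy m h
      rw [isPair_cast.1 hp, hF _ _ hz] at hFz
      exact (hz' (by simpa using hFz)).elim
  · rintro rfl
    refine ⟨⟨_, isPair_cast.2 rfl, (hF _ _ hz _).2 Nat.cast_zero.symm⟩, fun j hj => ?_⟩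
    obtain ⟨j, hjk, rfl⟩ := exists_cast_of_lt hj
    obtain ⟨z, hz, hz'⟩ := hlt' j hjk
    exact ⟨_, z, isPair_cast.2 rfl, by exact_mod_cast hz, (hF _ _ hz' _).2 rfl⟩

theorem RecursiveIn.exists_represents {X : Set ℕ} {D : M → Prop} (hdef : DefPred D)
    (hD : ∀ n : ℕ, D n ↔ n ∈ X) {f : ℕ →. ℕ} (hf : RecursiveIn (charFn X) f) :
    ∃ G : M → M → Prop, DefRel G ∧ Represents G f := by
  induction hf with
  | zero =>
    refine ⟨fun _ y => y = 0, ⟨inferInstance⟩, fun n m h y => ?_⟩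
    obtain rfl := Part.mem_some_iff.1 h
    simp
  | succ =>
    refine ⟨fun x y => y = x + 1, ⟨inferInstance⟩, fun n m h y => ?_⟩
    obtain rfl := Part.mem_some_iff.1 h
    simp
  | left => exact ⟨_, ⟨inferInstance⟩, represents_left⟩
  | right => exact ⟨_, ⟨inferInstance⟩, represents_right⟩
  | oracle => exact ⟨_, ⟨inferInstance⟩, represents_charFn hD⟩
  | pair _ _ ihf ihg =>
    obtain ⟨F, _, hF⟩ := ihf
    obtain ⟨G, _, hG⟩ := ihg
    exact ⟨_, ⟨inferInstance⟩, hF.pair hG⟩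
  | comp _ _ ihf ihg =>
    obtain ⟨F, _, hF⟩ := ihf
    obtain ⟨G, _, hG⟩ := ihg
    exact ⟨_, ⟨inferInstance⟩, hF.comp hG⟩
  | prec _ _ ihf ihg =>
    obtain ⟨F, _, hF⟩ := ihf
    obtain ⟨G, _, hG⟩ := ihg
    exact ⟨_, ⟨inferInstance⟩, hF.prec hG⟩
  | rfind _ ih =>
    obtain ⟨F, _, hF⟩ := ih
    exact ⟨_, ⟨inferInstance⟩, hF.rfind⟩

end Representability

/-! ### Standard systems are Scott sets -/

section StandardSystem

variable {M : Type*} [arith.Structure M] [PAModel M]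

open PAModel

theorem mem_SSy_of_defPred {a : M} (ha : ¬ IsStd a) {D : M → Prop} (hD : DefPred D) :
    {n : ℕ | D n} ∈ SSy M := by
  have hdef : DefPred fun n : M => ∃ c d, ∀ i, i < n → ∃ y z, Entry c d i y ∧
      Entry c d (i + 1) z ∧ y ≠ 0 ∧ DigitStep (D i) y z := ⟨inferInstance⟩
  obtain ⟨N, hN, c, d, h⟩ := overspill ha hdef fun n => by
    obtain ⟨s, hne, hs⟩ := exists_digits n {n : ℕ | D n}
    obtain ⟨c, d, hcd⟩ := exists_entry (M := M) s (n + 1)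
    refine ⟨c, d, fun i hi => ?_⟩
    obtain ⟨i, hin, rfl⟩ := exists_cast_of_lt hi
    exact ⟨s i, s (i + 1), hcd i (hin.trans (Nat.lt_succ_self n)),
      by simpa using hcd (i + 1) (Nat.succ_lt_succ hin), by exact_mod_cast hne i,
      digitStep_cast.2 (hs i hin)⟩
  choose y z hy hz hne hstep using fun i : ℕ => h i (cast_lt_of_not_isStd hN i)
  have hzy : ∀ i, z i = y (i + 1) := fun i => (hz i).unique (by exact_mod_cast hy (i + 1))
  simp only [hzy] at hstep
  exact mem_SSy_of_digits hstep hne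

theorem primrec_two_pow : Primrec fun n : ℕ => 2 ^ n := by
  refine (Primrec.nat_rec₁ 1 (f := fun _ k => 2 * k)
    (Primrec.nat_mul.comp (Primrec.const 2) Primrec.snd)).of_eq fun n => ?_
  induction n with
  | zero => rfl
  | succ n ih => rw [pow_succ', ← ih]

theorem exists_defPred_of_mem_SSy {X : Set ℕ} (hX : X ∈ SSy M) :
    ∃ D : M → Prop, DefPred D ∧ ∀ n : ℕ, D n ↔ n ∈ X := by
  obtain ⟨a, -, ha⟩ := hX
  obtain ⟨G, hG, hrep⟩ := RecursiveIn.exists_represents (M := M) (X := ∅) (D := fun _ => False)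
    ⟨inferInstance⟩ (by simp) (RecursiveIn.of_primrec primrec_two_pow)
  refine ⟨fun i => ∃ p, G i p ∧ ∃ u w, a = u * (p + p) + (p + w) ∧ w < p, ⟨inferInstance⟩,
    fun n => ?_⟩
  simp only [hrep n (2 ^ n) (Part.mem_some _), exists_eq_left]
  rw [ha, digitB_iff, pow_succ, mul_two, Nat.cast_add]

theorem turingLE_mem_SSy {a : M} (ha : ¬ IsStd a) {X Y : Set ℕ} (hX : X ∈ SSy M)
    (h : TuringLE Y X) : Y ∈ SSy M := by
  obtain ⟨D, hD, hDX⟩ := exists_defPred_of_mem_SSy hX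
  obtain ⟨G, hG, hrep⟩ := RecursiveIn.exists_represents hD hDX h
  have hY : Y = {n : ℕ | G n 1} := by
    ext n
    rw [Set.mem_ofPred_eq, hrep n _ (Part.mem_some _), ← charFn_eq_one, eq_comm]
    exact_mod_cast Iff.rfl
  have hdef : DefPred fun n : M => G n 1 := ⟨inferInstance⟩
  rw [hY]
  exact mem_SSy_of_defPred ha hdef

theorem exists_two_mul_add_iff {X : Set ℕ} {D : M → Prop} (hD : ∀ n : ℕ, D n ↔ n ∈ X) (b n : ℕ) :
    (∃ m : M, (n : M) = 2 * m + b ∧ D m) ↔ ∃ m ∈ X, n = 2 * m + b := by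
  constructor
  · rintro ⟨m, hm, hDm⟩
    obtain ⟨k, -, rfl⟩ : ∃ k ≤ n, m = k :=
      exists_cast_of_le (by rw [hm, two_mul, add_assoc]; exact le_self_add)
    exact ⟨k, (hD k).1 hDm, by exact_mod_cast hm⟩
  · rintro ⟨m, hm, rfl⟩
    exact ⟨m, by push_cast; rfl, (hD m).2 hm⟩

theorem turingJoin_mem_SSy {a : M} (ha : ¬ IsStd a) {X Y : Set ℕ} (hX : X ∈ SSy M)
    (hY : Y ∈ SSy M) : turingJoin X Y ∈ SSy M := by
  obtain ⟨D, hD, hDX⟩ := exists_defPred_of_mem_SSy hX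
  obtain ⟨E, hE, hEY⟩ := exists_defPred_of_mem_SSy hY
  have hjoin : turingJoin X Y = {n : ℕ | (∃ m : M, (n : M) = 2 * m + (0 : ℕ) ∧ D m) ∨
      ∃ m : M, (n : M) = 2 * m + (1 : ℕ) ∧ E m} := by
    ext n
    rw [Set.mem_ofPred_eq, exists_two_mul_add_iff hDX, exists_two_mul_add_iff hEY]
    rfl
  have hdef : DefPred fun n : M => (∃ m : M, n = 2 * m + (0 : ℕ) ∧ D m) ∨
      ∃ m : M, n = 2 * m + (1 : ℕ) ∧ E m := ⟨inferInstance⟩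
  rw [hjoin]
  exact mem_SSy_of_defPred ha hdef

theorem TreeInf.exists_length {T : Set ℕ} (hT : IsBinTreeSet T) (hinf : TreeInf T) (n : ℕ) :
    ∃ l : List Bool, l.length = n ∧ Encodable.encode l ∈ T := by
  obtain ⟨l, hl, hn⟩ : ∃ l : List Bool, Encodable.encode l ∈ T ∧ n ≤ l.length := by
    by_contra! h
    exact hinf ((List.finite_length_lt Bool n).subset fun l hl => h l hl)
  exact ⟨l.take n, by simpa using hn, hT l hl _ (List.take_prefix n l)⟩

/-- If `u` is the code of the string `l`, then `w` is the code of `b :: l`. -/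
def IsCons (b : Bool) (u w : M) : Prop := ∃ p, IsPair (b.toNat : M) u p ∧ w = p + 1

instance (b : Bool) : DefRel (IsCons b : M → M → Prop) := ⟨by unfold IsCons; infer_instance⟩

theorem isCons_encode {b : Bool} {l : List Bool} {w : M} :
    IsCons b ((Encodable.encode l : ℕ) : M) w ↔ w = (Encodable.encode (b :: l) : ℕ) := by
  have hcons : Encodable.encode (b :: l) = Nat.pair b.toNat (Encodable.encode l) + 1 := by
    cases b <;> rfl
  simp [IsCons, isPair_cast, hcons]

/-- `c` and `d` code a sequence of strings that starts with the empty one and in which each string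
with index less than `n` satisfies `D` and is extended by one bit at the front in the next. -/
def CodesBranch (D : M → Prop) (c d n : M) : Prop :=
  Entry c d 0 0 ∧ ∀ i, i < n → ∃ u w, Entry c d i u ∧ Entry c d (i + 1) w ∧ D u ∧
    (IsCons false u w ∨ IsCons true u w)

variable {D : M → Prop} {c d N : M}

theorem exists_codesBranch {l : List Bool}
    (hl : ∀ i, D (Encodable.encode (l.take i).reverse : ℕ)) :
    ∃ c d, CodesBranch D c d l.length := by
  obtain ⟨c, d, hcd⟩ := exists_entry (M := M)
    (fun i => Encodable.encode (l.take i).reverse) (l.length + 1)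
  refine ⟨c, d, by simpa using hcd 0 l.length.succ_pos, fun i hi => ?_⟩
  obtain ⟨i, hil, rfl⟩ := exists_cast_of_lt hi
  have hsucc : (l.take (i + 1)).reverse = l[i] :: (l.take i).reverse := by
    rw [List.take_succ_eq_append_getElem hil, List.reverse_append]
    rfl
  refine ⟨_, _, hcd i (hil.trans (Nat.lt_succ_self _)),
    by exact_mod_cast hcd (i + 1) (Nat.succ_lt_succ hil), hl i, ?_⟩
  rw [isCons_encode, isCons_encode, hsucc]
  cases l[i] <;> simp

/-- The bit at position `i` of the branch coded by `c` and `d` is `1`. -/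
def BranchBit (c d i : M) : Prop := ∃ u w, Entry c d i u ∧ Entry c d (i + 1) w ∧ IsCons true u w

theorem CodesBranch.entry (h : CodesBranch D c d N) (hN : ¬ IsStd N) {f : ℕ → Bool}
    (hf : ∀ i : ℕ, f i = true ↔ BranchBit c d (i : M)) (i : ℕ) :
    Entry c d (i : M) (Encodable.encode (List.ofFn fun j : Fin i => f j).reverse : ℕ) := by
  induction i with
  | zero => simpa using h.1
  | succ i ih =>
    obtain ⟨u, w, hu, hw, -, hcons⟩ := h.2 i (cast_lt_of_not_isStd hN i)
    obtain rfl := hu.unique ih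
    obtain ⟨b, hb⟩ : ∃ b, IsCons b _ w := hcons.elim (⟨_, ·⟩) (⟨_, ·⟩)
    obtain rfl := isCons_encode.1 hb
    have hbit : f i = b := by
      rw [Bool.eq_iff_iff, hf]
      constructor
      · rintro ⟨u', w', hu', hw', h'⟩
        rw [← hu.unique hu', ← hw.unique hw', isCons_encode, Nat.cast_inj] at h'
        exact (List.cons.inj (Encodable.encode_injective h')).1
      · rintro rfl
        exact ⟨_, _, hu, hw, hb⟩
    rw [List.ofFn_succ_last, List.reverse_append]
    simpa [hbit] using hw

theorem exists_path_mem_SSy {a : M} (ha : ¬ IsStd a) {T : Set ℕ} (hT : T ∈ SSy M)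
    (htree : IsBinTreeSet T) (hinf : TreeInf T) : ∃ P ∈ SSy M, PathThrough P T := by
  have hrev : Primrec fun n => Encodable.encode (strOf n).reverse :=
    Primrec.encode.comp (Primrec.list_reverse.comp primrec_strOf)
  obtain ⟨D, hD, hDT⟩ := exists_defPred_of_mem_SSy
    (turingLE_mem_SSy ha hT (turingLE_preimage (X := T) hrev))
  have hDT : ∀ l : List Bool, D (Encodable.encode l.reverse : ℕ) ↔ Encodable.encode l ∈ T :=
    fun l => by rw [hDT, Set.mem_preimage, strOf_encode, List.reverse_reverse]
  have hdef : DefPred fun n : M => ∃ c d, CodesBranch D c d n :=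
    ⟨by unfold CodesBranch; infer_instance⟩
  obtain ⟨N, hN, c, d, hcd⟩ := overspill ha hdef fun n => by
    obtain ⟨l, rfl, hl⟩ := hinf.exists_length htree n
    exact exists_codesBranch fun i => (hDT _).2 (htree l hl _ (List.take_prefix i l))
  have hbit : DefPred fun i : M => BranchBit c d i := ⟨by unfold BranchBit; infer_instance⟩
  refine ⟨_, mem_SSy_of_defPred ha hbit, fun f hf m => ?_⟩
  obtain ⟨u, -, hu, -, hDu, -⟩ := hcd.2 m (cast_lt_of_not_isStd hN m)
  rwa [hu.unique (hcd.entry hN hf m), hDT] at hDu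

theorem scottSet_SSy {a : M} (ha : ¬ IsStd a) : ScottSet (SSy M) :=
  ⟨⟨_, mem_SSy_of_defPred ha (D := fun _ => True) ⟨inferInstance⟩⟩,
    ⟨fun _ hX _ hY => turingJoin_mem_SSy ha hX hY, fun _ hX _ h => turingLE_mem_SSy ha hX h⟩,
    fun _ hT h h' => exists_path_mem_SSy ha hT h h'⟩

end StandardSystem

/-! ### Non-standard models -/

section Nonstandard

variable {M : Type*} [arith.Structure M]

theorem equiv_numeral (e : M ≃[arith] ℕ) (n : ℕ) : e (numeral M n) = n := by
  induction n with
  | zero => exact e.map_fun (L := arith) arithFunc.zero ![]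
  | succ n ih =>
    have hone : e (oneM M) = 1 := e.map_fun (L := arith) arithFunc.one ![]
    refine (e.map_fun (L := arith) arithFunc.add ![numeral M n, oneM M]).trans ?_
    exact congrArg₂ (· + ·) ih hone

variable [PAModel M]

open PAModel

theorem nonempty_equiv_of_forall_isStd (h : ∀ a : M, IsStd a) : Nonempty (M ≃[arith] ℕ) := by
  refine ⟨FirstOrder.Language.Equiv.symm
    { toEquiv := _root_.Equiv.ofBijective (fun n : ℕ => (n : M))
        ⟨Nat.cast_injective, fun x => (isStd_iff.1 (h x)).imp fun _ hn => hn.symm⟩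
      map_fun' := fun {n} g x => ?_
      map_rel' := fun {n} r x => ?_ }⟩
  · have happly : ∀ x : Fin 2 → ℕ, ![(x 0 : M), (x 1 : M)] = fun i => (x i : M) := fun x => by
      funext i
      fin_cases i <;> rfl
    cases g with
    | zero =>
      exact Nat.cast_zero.trans
        (congrArg (Structure.funMap (L := arith) arithFunc.zero) (Subsingleton.elim _ _))
    | one =>
      exact Nat.cast_one.trans
        (congrArg (Structure.funMap (L := arith) arithFunc.one) (Subsingleton.elim _ _))
    | add =>
      exact (Nat.cast_add _ _).trans
        (congrArg (Structure.funMap (L := arith) arithFunc.add) (happly x))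
    | mul =>
      exact (Nat.cast_mul _ _).trans
        (congrArg (Structure.funMap (L := arith) arithFunc.mul) (happly x))
  · cases r with
    | lt =>
      refine Iff.trans (iff_of_eq (congrArg (Structure.RelMap (L := arith) arithRel.lt) ?_))
        (Nat.cast_lt (α := M) (m := x 0) (n := x 1))
      funext i
      fin_cases i <;> rfl

theorem exists_not_isStd_iff : (∃ a : M, ¬ IsStd a) ↔ ¬ Nonempty (M ≃[arith] ℕ) := by
  constructor
  · rintro ⟨a, ha⟩ ⟨e⟩
    exact ha ⟨e a, e.injective (equiv_numeral e _).symm⟩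
  · intro h
    by_contra! hstd
    exact h (nonempty_equiv_of_forall_isStd hstd)

end Nonstandard

/-! ### Formulas over ternary relations -/

/-- First-order formulas over ternary relation symbols `0, 1, 2, …`, with de Bruijn indices as
variables. Unlike `FirstOrder.Language.Formula`, they come with an explicit numbering, which makes
the clauses of a Henkin construction primitive recursive. -/
inductive RelFormula
  | atom (r i j l : ℕ)
  | nand (a b : RelFormula)
  | all (a : RelFormula)

/-- The environment that assigns `x` to the variable `0` and shifts `e` up by one. -/
def econs {D : Type*} (x : D) (e : ℕ → D) : ℕ → D
  | 0 => x
  | n + 1 => e n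

@[simp] theorem econs_comp_succ {D : Type*} (x : D) (e : ℕ → D) : econs x e ∘ Nat.succ = e := rfl

namespace RelFormula

/-- Satisfaction in the structure that interprets the relation symbol `r` by `R r`. -/
def sat {D : Type*} (R : ℕ → D → D → D → Prop) : RelFormula → (ℕ → D) → Prop
  | atom r i j l, e => R r (e i) (e j) (e l)
  | nand a b, e => ¬ (sat R a e ∧ sat R b e)
  | all a, e => ∀ x, sat R a (econs x e)

/-- Negation. -/
def neg (a : RelFormula) : RelFormula := nand a a

/-- Conjunction. -/
def and (a b : RelFormula) : RelFormula := neg (nand a b)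

/-- Disjunction. -/
def or (a b : RelFormula) : RelFormula := nand (neg a) (neg b)

/-- Implication. -/
def imp (a b : RelFormula) : RelFormula := nand a (neg b)

/-- Existential quantification. -/
def ex (a : RelFormula) : RelFormula := neg (all (neg a))

/-- Iterated universal quantification. -/
def alls : ℕ → RelFormula → RelFormula
  | 0, a => a
  | n + 1, a => all (alls n a)

/-- Conjunction of a list of formulas. -/
def conj : List RelFormula → RelFormula
  | [] => all (imp (atom 0 0 0 0) (atom 0 0 0 0))
  | a :: l => and a (conj l)

section Sat

variable {D : Type*} (R : ℕ → D → D → D → Prop) (a b : RelFormula) (e : ℕ → D)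

theorem sat_atom (r i j l : ℕ) : (atom r i j l).sat R e ↔ R r (e i) (e j) (e l) := Iff.rfl

theorem sat_nand : (nand a b).sat R e ↔ ¬ (a.sat R e ∧ b.sat R e) := Iff.rfl

theorem sat_all : (all a).sat R e ↔ ∀ x, a.sat R (econs x e) := Iff.rfl

theorem sat_neg : (neg a).sat R e ↔ ¬ a.sat R e := by rw [neg, sat_nand, and_self]

theorem sat_and : (and a b).sat R e ↔ a.sat R e ∧ b.sat R e := by
  rw [and, sat_neg, sat_nand, not_not]

theorem sat_or : (or a b).sat R e ↔ a.sat R e ∨ b.sat R e := by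
  rw [or, sat_nand, sat_neg, sat_neg, ← not_or, not_not]

theorem sat_imp : (imp a b).sat R e ↔ (a.sat R e → b.sat R e) := by
  rw [imp, sat_nand, sat_neg, not_and, not_not]

theorem sat_ex : (ex a).sat R e ↔ ∃ x, a.sat R (econs x e) := by
  simp only [ex, sat_neg, sat_all, not_forall, not_not]

theorem sat_conj (l : List RelFormula) : (conj l).sat R e ↔ ∀ a ∈ l, a.sat R e := by
  induction l with
  | nil => simp [conj, sat_all, sat_imp]
  | cons a l ih => rw [conj, sat_and, ih, List.forall_mem_cons]

end Sat

section Rename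

variable {D : Type*} (R : ℕ → D → D → D → Prop) (a : RelFormula)

/-- A strict bound on the free variables. -/
def varBound : RelFormula → ℕ
  | atom _ i j l => max i (max j l) + 1
  | nand a b => max a.varBound b.varBound
  | all a => a.varBound

theorem sat_congr {e e' : ℕ → D} (h : ∀ i < a.varBound, e i = e' i) :
    a.sat R e ↔ a.sat R e' := by
  induction a generalizing e e' with
  | atom r i j l =>
    simp only [varBound] at h
    rw [sat_atom, sat_atom, h i (by omega), h j (by omega), h l (by omega)]
  | nand a b iha ihb =>
    simp only [varBound, lt_max_iff] at h
    rw [sat_nand, sat_nand, iha fun i hi => h i (.inl hi), ihb fun i hi => h i (.inr hi)]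
  | all a ih =>
    refine forall_congr' fun x => ih fun i hi => ?_
    cases i with
    | zero => rfl
    | succ i => exact h i (Nat.lt_of_succ_lt hi)

/-- The action of a renaming of variables under a binder. -/
def lift (ρ : ℕ → ℕ) : ℕ → ℕ
  | 0 => 0
  | n + 1 => ρ n + 1

theorem econs_comp_lift (x : D) (e : ℕ → D) (ρ : ℕ → ℕ) :
    econs x e ∘ lift ρ = econs x (e ∘ ρ) := by
  funext i
  cases i <;> rfl

/-- Renaming of the free variables. -/
def rename : (ℕ → ℕ) → RelFormula → RelFormula
  | ρ, atom r i j l => atom r (ρ i) (ρ j) (ρ l)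
  | ρ, nand a b => nand (rename ρ a) (rename ρ b)
  | ρ, all a => all (rename (lift ρ) a)

theorem sat_rename (ρ : ℕ → ℕ) (e : ℕ → D) : (a.rename ρ).sat R e ↔ a.sat R (e ∘ ρ) := by
  induction a generalizing ρ e with
  | atom r i j l => rfl
  | nand a b iha ihb => rw [rename, sat_nand, sat_nand, iha, ihb]
  | all a ih => exact forall_congr' fun x => by rw [ih, econs_comp_lift]

end Rename

/-- The number of the formula `atom r i j l`. -/
def atomCode (r i j l : ℕ) : ℕ := 3 * Nat.pair r (Nat.pair i (Nat.pair j l))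

/-- The number of the formula `nand a b`, in terms of the numbers of `a` and `b`. -/
def nandCode (a b : ℕ) : ℕ := 3 * Nat.pair a b + 1

/-- The number of the formula `all a`, in terms of the number of `a`. -/
def allCode (a : ℕ) : ℕ := 3 * a + 2

/-- A Gödel numbering of the formulas. -/
def code : RelFormula → ℕ
  | atom r i j l => atomCode r i j l
  | nand a b => nandCode a.code b.code
  | all a => allCode a.code

theorem code_surjective : Function.Surjective code := by
  intro n
  induction n using Nat.strong_induction_on with
  | _ n ih =>
    have hmod : n % 3 = 0 ∨ n % 3 = 1 ∨ n % 3 = 2 := by omega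
    rcases hmod with h | h | h
    · refine ⟨atom (n / 3).unpair.1 (n / 3).unpair.2.unpair.1
        (n / 3).unpair.2.unpair.2.unpair.1 (n / 3).unpair.2.unpair.2.unpair.2, ?_⟩
      simp only [code, atomCode, Nat.pair_unpair]
      omega
    · obtain ⟨a, ha⟩ := ih (n / 3).unpair.1 ((Nat.unpair_left_le _).trans_lt (by omega))
      obtain ⟨b, hb⟩ := ih (n / 3).unpair.2 ((Nat.unpair_right_le _).trans_lt (by omega))
      refine ⟨nand a b, ?_⟩
      simp only [code, nandCode, ha, hb, Nat.pair_unpair]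
      omega
    · obtain ⟨a, ha⟩ := ih (n / 3) (by omega)
      refine ⟨all a, ?_⟩
      simp only [code, allCode, ha]
      omega

theorem code_injective : Function.Injective code := by
  intro a b h
  induction a generalizing b with
  | atom r i j l =>
    cases b with
    | atom r' i' j' l' =>
      have h := Nat.mul_left_cancel (by omega) h
      simp only [Nat.pair_eq_pair] at h
      obtain ⟨rfl, rfl, rfl, rfl⟩ := h
      rfl
    | nand | all => simp only [code, atomCode, nandCode, allCode] at h; omega
  | nand a₁ a₂ ih₁ ih₂ =>
    cases b with
    | nand b₁ b₂ =>
      have h := Nat.mul_left_cancel (by omega) (Nat.succ_injective h)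
      rw [Nat.pair_eq_pair] at h
      rw [ih₁ h.1, ih₂ h.2]
    | atom | all => simp only [code, atomCode, nandCode, allCode] at h; omega
  | all a ih =>
    cases b with
    | all b => rw [ih (b := b) (by simp only [code, allCode] at h; omega)]
    | atom | nand => simp only [code, atomCode, nandCode, allCode] at h; omega

/-- The formula with a given number. -/
noncomputable def ofCode : ℕ → RelFormula := Function.surjInv code_surjective

@[simp] theorem ofCode_code (a : RelFormula) : ofCode a.code = a :=
  code_injective (Function.surjInv_eq code_surjective _)

end RelFormula

/-! ### Relational presentations of arithmetic -/

section Presentation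

open RelFormula

variable {D : Type*} (R : ℕ → D → D → D → Prop)

/-- Equality, in a relational presentation. The symbols `0`, …, `5` stand for the graphs of
equality, order, addition, multiplication, zero and one, with the last argument repeated to fill up
to three places. -/
def rEq (x y : D) : Prop := R 0 x y y

/-- The order. -/
def rLt (x y : D) : Prop := R 1 x y y

/-- The graph of addition. -/
def rAdd (x y z : D) : Prop := R 2 x y z

/-- The graph of multiplication. -/
def rMul (x y z : D) : Prop := R 3 x y z

/-- The property of being zero. -/
def rZero (x : D) : Prop := R 4 x x x

/-- The property of being one. -/
def rOne (x : D) : Prop := R 5 x x x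

/-- `x = 2 * y + b`. -/
def rBit : Bool → D → D → Prop
  | false, x, y => rAdd R y y x
  | true, x, y => ∃ w o, rOne R o ∧ rAdd R y y w ∧ rAdd R w o x

/-- The formula expressing `rEq`. -/
def fEq (i j : ℕ) : RelFormula := atom 0 i j j

/-- The formula expressing `rLt`. -/
def fLt (i j : ℕ) : RelFormula := atom 1 i j j

/-- The formula expressing `rAdd`. -/
def fAdd (i j l : ℕ) : RelFormula := atom 2 i j l

/-- The formula expressing `rMul`. -/
def fMul (i j l : ℕ) : RelFormula := atom 3 i j l

/-- The formula expressing `rZero`. -/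
def fZero (i : ℕ) : RelFormula := atom 4 i i i

/-- The formula expressing `rOne`. -/
def fOne (i : ℕ) : RelFormula := atom 5 i i i

/-- The formula expressing `rBit`. -/
def fBit : Bool → ℕ → ℕ → RelFormula
  | false, i, j => fAdd j j i
  | true, i, j => ex (ex (and (fOne 0) (and (fAdd (j + 2) (j + 2) 1) (fAdd 1 0 (i + 2)))))

section SatAtomic

variable (e : ℕ → D) (i j : ℕ)

theorem sat_fLt : (fLt i j).sat R e ↔ rLt R (e i) (e j) := Iff.rfl

theorem sat_fBit (b : Bool) : (fBit b i j).sat R e ↔ rBit R b (e i) (e j) := by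
  cases b
  · exact Iff.rfl
  · simp only [fBit, sat_ex, sat_and]
    exact Iff.rfl

end SatAtomic

/-- The finitely many axioms of a relational presentation of arithmetic: `rEq` is a congruence, the
operations are total and functional, and the axioms of Peano arithmetic other than induction
hold. -/
structure IsArithPresentation : Prop where
  eq_refl : ∀ x, rEq R x x
  congr : ∀ r < 6, ∀ x x' y y' z z', rEq R x x' → rEq R y y' → rEq R z z' →
    R r x y z → R r x' y' z'
  exists_add : ∀ x y, ∃ z, rAdd R x y z
  add_unique : ∀ x y z z', rAdd R x y z → rAdd R x y z' → rEq R z z'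
  exists_mul : ∀ x y, ∃ z, rMul R x y z
  mul_unique : ∀ x y z z', rMul R x y z → rMul R x y z' → rEq R z z'
  exists_zero : ∃ x, rZero R x
  zero_unique : ∀ x x', rZero R x → rZero R x' → rEq R x x'
  exists_one : ∃ x, rOne R x
  one_unique : ∀ x x', rOne R x → rOne R x' → rEq R x x'
  add_zero : ∀ x z, rZero R z → rAdd R x z x
  add_succ : ∀ o x y y' w w', rOne R o → rAdd R y o y' → rAdd R x y w → rAdd R w o w' →
    rAdd R x y' w'
  mul_zero : ∀ x z, rZero R z → rMul R x z z
  mul_succ : ∀ o x y y' w w', rOne R o → rAdd R y o y' → rMul R x y w → rAdd R w x w' →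
    rMul R x y' w'
  not_lt_zero : ∀ x z, rZero R z → ¬ rLt R x z
  lt_or_eq_of_lt_succ : ∀ o x y y', rOne R o → rAdd R y o y' → rLt R x y' → rLt R x y ∨ rEq R x y
  lt_succ : ∀ o x y y', rOne R o → rAdd R y o y' → rLt R x y ∨ rEq R x y → rLt R x y'
  succ_ne_zero : ∀ o x x', rOne R o → rAdd R x o x' → ¬ rZero R x'
  succ_inj : ∀ o x y w, rOne R o → rAdd R x o w → rAdd R y o w → rEq R x y
  eq_zero_or_eq_succ : ∀ x, rZero R x ∨ ∃ y o, rOne R o ∧ rAdd R y o x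

/-- The formulas expressing the fields of `IsArithPresentation`, in their order. -/
def arithAxioms : List RelFormula :=
  alls 1 (fEq 0 0) ::
  (List.range 6).map (fun r => alls 6 (imp (fEq 5 4) (imp (fEq 3 2) (imp (fEq 1 0)
    (imp (atom r 5 3 1) (atom r 4 2 0)))))) ++
  [alls 2 (ex (fAdd 2 1 0)),
    alls 4 (imp (fAdd 3 2 1) (imp (fAdd 3 2 0) (fEq 1 0))),
    alls 2 (ex (fMul 2 1 0)),
    alls 4 (imp (fMul 3 2 1) (imp (fMul 3 2 0) (fEq 1 0))),
    ex (fZero 0),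
    alls 2 (imp (fZero 1) (imp (fZero 0) (fEq 1 0))),
    ex (fOne 0),
    alls 2 (imp (fOne 1) (imp (fOne 0) (fEq 1 0))),
    alls 2 (imp (fZero 0) (fAdd 1 0 1)),
    alls 6 (imp (fOne 5) (imp (fAdd 3 5 2) (imp (fAdd 4 3 1) (imp (fAdd 1 5 0) (fAdd 4 2 0))))),
    alls 2 (imp (fZero 0) (fMul 1 0 0)),
    alls 6 (imp (fOne 5) (imp (fAdd 3 5 2) (imp (fMul 4 3 1) (imp (fAdd 1 4 0) (fMul 4 2 0))))),
    alls 2 (imp (fZero 0) (neg (fLt 1 0))),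
    alls 4 (imp (fOne 3) (imp (fAdd 1 3 0) (imp (fLt 2 0) (or (fLt 2 1) (fEq 2 1))))),
    alls 4 (imp (fOne 3) (imp (fAdd 1 3 0) (imp (or (fLt 2 1) (fEq 2 1)) (fLt 2 0)))),
    alls 3 (imp (fOne 2) (imp (fAdd 1 2 0) (neg (fZero 0)))),
    alls 4 (imp (fOne 3) (imp (fAdd 2 3 0) (imp (fAdd 1 3 0) (fEq 2 1)))),
    alls 1 (or (fZero 0) (ex (ex (and (fOne 0) (fAdd 1 0 2)))))]

theorem sat_conj_arithAxioms (e : ℕ → D) :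
    (conj arithAxioms).sat R e ↔ IsArithPresentation R := by
  rw [sat_conj]
  simp only [arithAxioms, List.cons_append, List.forall_mem_cons, List.forall_mem_append,
    List.forall_mem_map, List.mem_range, List.not_mem_nil, IsEmpty.forall_iff, implies_true,
    and_true, alls, sat_all, sat_imp, sat_ex, sat_and, sat_or, sat_neg]
  constructor
  · rintro ⟨h₁, h₂, h₃, h₄, h₅, h₆, h₇, h₈, h₉, h₁₀, h₁₁, h₁₂, h₁₃, h₁₄, h₁₅, h₁₆, h₁₇, h₁₈, h₁₉,
      h₂₀⟩
    exact ⟨h₁, h₂, h₃, h₄, h₅, h₆, h₇, h₈, h₉, h₁₀, h₁₁, h₁₂, h₁₃, h₁₄, h₁₅, h₁₆, h₁₇, h₁₈, h₁₉,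
      h₂₀⟩
  · rintro ⟨h₁, h₂, h₃, h₄, h₅, h₆, h₇, h₈, h₉, h₁₀, h₁₁, h₁₂, h₁₃, h₁₄, h₁₅, h₁₆, h₁₇, h₁₈, h₁₉,
      h₂₀⟩
    exact ⟨h₁, h₂, h₃, h₄, h₅, h₆, h₇, h₈, h₉, h₁₀, h₁₁, h₁₂, h₁₃, h₁₄, h₁₅, h₁₆, h₁₇, h₁₈, h₁₉,
      h₂₀⟩

/-- The least number principle for the complement of the set defined by `a`, with the variable `0`
as its argument. -/
def lnp (a : RelFormula) : RelFormula :=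
  imp (ex (neg a)) (ex (and (neg a) (all (imp (fLt 0 1) (a.rename (lift Nat.succ))))))

theorem sat_lnp (a : RelFormula) (e : ℕ → D) :
    (lnp a).sat R e ↔ ((∃ x, ¬ a.sat R (econs x e)) →
      ∃ x, ¬ a.sat R (econs x e) ∧ ∀ y, rLt R y x → a.sat R (econs y e)) := by
  simp only [lnp, sat_imp, sat_ex, sat_neg, sat_and, sat_all, sat_fLt, sat_rename,
    econs_comp_lift, econs_comp_succ]
  rfl

/-- A relational presentation of a model of Peano arithmetic. Induction takes the form of the least
number principle for all formulas. -/
structure IsPAPresentation : Prop extends IsArithPresentation R where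
  sat_lnp : ∀ (a : RelFormula) (e : ℕ → D), (lnp a).sat R e

/-- The relational presentation of the standard model. -/
def natR : ℕ → ℕ → ℕ → ℕ → Prop
  | 0, x, y, _ => x = y
  | 1, x, y, _ => x < y
  | 2, x, y, z => x + y = z
  | 3, x, y, z => x * y = z
  | 4, x, _, _ => x = 0
  | 5, x, _, _ => x = 1
  | _, _, _, _ => True

theorem isArithPresentation_natR : IsArithPresentation natR where
  eq_refl _ := rfl
  congr := by rintro r - x _ y _ z _ rfl rfl rfl h; exact h
  exists_add x y := ⟨x + y, rfl⟩
  add_unique _ _ _ _ h h' := h.symm.trans h'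
  exists_mul x y := ⟨x * y, rfl⟩
  mul_unique _ _ _ _ h h' := h.symm.trans h'
  exists_zero := ⟨0, rfl⟩
  zero_unique _ _ h h' := h.trans h'.symm
  exists_one := ⟨1, rfl⟩
  one_unique _ _ h h' := h.trans h'.symm
  add_zero := by rintro x _ rfl; rfl
  add_succ := by rintro _ x y _ _ _ rfl rfl rfl rfl; rfl
  mul_zero := by rintro x _ rfl; rfl
  mul_succ := by rintro _ x y _ _ _ rfl rfl rfl rfl; rfl
  not_lt_zero := by rintro x _ rfl; exact Nat.not_lt_zero x
  lt_or_eq_of_lt_succ := by rintro _ x y _ rfl rfl h; exact Nat.lt_succ_iff_lt_or_eq.1 h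
  lt_succ := by rintro _ x y _ rfl rfl h; exact Nat.lt_succ_iff_lt_or_eq.2 h
  succ_ne_zero := by rintro _ x _ rfl rfl; exact Nat.succ_ne_zero x
  succ_inj := by rintro _ x y _ rfl rfl h; exact (Nat.succ_injective h).symm
  eq_zero_or_eq_succ
    | 0 => .inl rfl
    | x + 1 => .inr ⟨x, 1, rfl, rfl⟩

theorem isPAPresentation_natR : IsPAPresentation natR where
  toIsArithPresentation := isArithPresentation_natR
  sat_lnp a e := by
    classical
    refine (sat_lnp natR a e).2 fun h => ⟨Nat.find h, Nat.find_spec h, fun y hy => ?_⟩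
    exact not_not.1 (Nat.find_min h hy)

end Presentation

open RelFormula

/-! ### Models of relational presentations -/

section Quotient

variable {D : Type*} {R : ℕ → D → D → D → Prop}

/-- The map `π` exhibits the structure `M` as the one presented by `R`. -/
structure Presents {M : Type*} [arith.Structure M] (R : ℕ → D → D → D → Prop) (π : D → M) :
    Prop where
  surjective : Function.Surjective π
  eq_iff : ∀ x y, π x = π y ↔ rEq R x y
  lt_iff : ∀ x y, ltM (π x) (π y) ↔ rLt R x y
  add_iff : ∀ x y z, addM (π x) (π y) = π z ↔ rAdd R x y z
  mul_iff : ∀ x y z, mulM (π x) (π y) = π z ↔ rMul R x y z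
  zero_iff : ∀ x, zeroM M = π x ↔ rZero R x
  one_iff : ∀ x, oneM M = π x ↔ rOne R x

namespace IsArithPresentation

theorem eq_symm (hR : IsArithPresentation R) {x y : D} (h : rEq R x y) : rEq R y x :=
  hR.congr 0 (by norm_num) _ _ _ _ _ _ h (hR.eq_refl x) (hR.eq_refl x) (hR.eq_refl x)

theorem eq_trans (hR : IsArithPresentation R) {x y z : D} (h : rEq R x y) (h' : rEq R y z) :
    rEq R x z :=
  hR.congr 0 (by norm_num) _ _ _ _ _ _ (hR.eq_refl x) h' h' h

/-- Equality of the presented elements. -/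
def setoid (hR : IsArithPresentation R) : Setoid D where
  r := rEq R
  iseqv := ⟨hR.eq_refl, hR.eq_symm, hR.eq_trans⟩

/-- The structure presented by `R`. -/
def Model (hR : IsArithPresentation R) : Type _ := Quotient hR.setoid

variable (hR : IsArithPresentation R)

/-- The element presented by `x`. -/
def toModel (x : D) : hR.Model := Quotient.mk hR.setoid x

theorem toModel_eq_iff {x y : D} : hR.toModel x = hR.toModel y ↔ rEq R x y :=
  Quotient.eq (r := hR.setoid)

/-- A representative of an element. -/
noncomputable def rep (a : hR.Model) : D := Quotient.out a

theorem rep_toModel (x : D) : rEq R (hR.rep (hR.toModel x)) x := Quotient.mk_out (s := hR.setoid) x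

noncomputable instance : arith.Structure hR.Model where
  funMap f v :=
    match f with
    | .zero => hR.toModel hR.exists_zero.choose
    | .one => hR.toModel hR.exists_one.choose
    | .add => hR.toModel (hR.exists_add (hR.rep (v 0)) (hR.rep (v 1))).choose
    | .mul => hR.toModel (hR.exists_mul (hR.rep (v 0)) (hR.rep (v 1))).choose
  RelMap r v :=
    match r with
    | .lt => rLt R (hR.rep (v 0)) (hR.rep (v 1))

instance [Countable D] : Countable hR.Model := Quotient.countable

theorem toModel_eq_iff_of_unique {r : ℕ} (hr : r < 6)
    (hunique : ∀ x y z z', R r x y z → R r x y z' → rEq R z z') {x y c : D}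
    (hc : R r (hR.rep (hR.toModel x)) (hR.rep (hR.toModel y)) c) (z : D) :
    hR.toModel c = hR.toModel z ↔ R r x y z := by
  have hc' : R r x y c :=
    hR.congr r hr _ _ _ _ _ _ (hR.rep_toModel x) (hR.rep_toModel y) (hR.eq_refl c) hc
  rw [toModel_eq_iff]
  exact ⟨fun h => hR.congr r hr _ _ _ _ _ _ (hR.eq_refl x) (hR.eq_refl y) h hc',
    hunique x y c z hc'⟩

theorem presents_toModel : Presents R hR.toModel where
  surjective := Quotient.exists_rep
  eq_iff _ _ := hR.toModel_eq_iff
  lt_iff x y := by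
    refine ⟨hR.congr 1 (by norm_num) _ _ _ _ _ _ (hR.rep_toModel x) (hR.rep_toModel y)
      (hR.rep_toModel y), hR.congr 1 (by norm_num) _ _ _ _ _ _ ?_ ?_ ?_⟩ <;>
    exact hR.eq_symm (hR.rep_toModel _)
  add_iff x y := hR.toModel_eq_iff_of_unique (by norm_num) hR.add_unique
    (hR.exists_add (hR.rep (hR.toModel x)) (hR.rep (hR.toModel y))).choose_spec
  mul_iff x y := hR.toModel_eq_iff_of_unique (by norm_num) hR.mul_unique
    (hR.exists_mul (hR.rep (hR.toModel x)) (hR.rep (hR.toModel y))).choose_spec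
  zero_iff x := hR.toModel_eq_iff.trans
    ⟨fun h => hR.congr 4 (by norm_num) _ _ _ _ _ _ h h h hR.exists_zero.choose_spec,
      hR.zero_unique _ _ hR.exists_zero.choose_spec⟩
  one_iff x := hR.toModel_eq_iff.trans
    ⟨fun h => hR.congr 5 (by norm_num) _ _ _ _ _ _ h h h hR.exists_one.choose_spec,
      hR.one_unique _ _ hR.exists_one.choose_spec⟩

end IsArithPresentation

end Quotient

/-! ### Translation of arithmetical formulas -/

namespace Presents

variable {D M : Type*} [arith.Structure M] {R : ℕ → D → D → D → Prop} {π : D → M}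

theorem exists_relFormula_apply₂ (h : Presents R π) {t₁ t₂ : (ℕ → D) → M} {a₁ a₂ b : RelFormula}
    {Q : M → M → (ℕ → D) → Prop} (h₁ : ∀ e x, a₁.sat R (econs x e) ↔ t₁ e = π x)
    (h₂ : ∀ e x, a₂.sat R (econs x e) ↔ t₂ e = π x)
    (hb : ∀ e x y, b.sat R (econs x (econs y e)) ↔ Q (π x) (π y) e) :
    ∃ a : RelFormula, ∀ e, a.sat R e ↔ Q (t₁ e) (t₂ e) e := by
  refine ⟨ex (ex (and (a₁.rename (lift Nat.succ)) (and (a₂.rename Nat.succ) b))), fun e => ?_⟩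
  simp only [sat_ex, sat_and, sat_rename, econs_comp_lift, econs_comp_succ, h₁, h₂, hb]
  constructor
  · rintro ⟨y, x, hx, hy, hQ⟩
    rwa [hx, hy]
  · intro hQ
    obtain ⟨x, hx⟩ := h.surjective (t₁ e)
    obtain ⟨y, hy⟩ := h.surjective (t₂ e)
    exact ⟨y, x, hx.symm, hy.symm, by rwa [hx, hy]⟩

theorem exists_relFormula_binop (h : Presents R π) {g : M → M → M} {b : RelFormula}
    (hb : ∀ e x y, b.sat R (econs x (econs y e)) ↔ g (π x) (π y) = π (e 0))
    {t₁ t₂ : (ℕ → D) → M} (h₁ : ∃ a : RelFormula, ∀ e x, a.sat R (econs x e) ↔ t₁ e = π x)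
    (h₂ : ∃ a : RelFormula, ∀ e x, a.sat R (econs x e) ↔ t₂ e = π x) :
    ∃ a : RelFormula, ∀ e x, a.sat R (econs x e) ↔ g (t₁ e) (t₂ e) = π x := by
  obtain ⟨a₁, h₁⟩ := h₁
  obtain ⟨a₂, h₂⟩ := h₂
  obtain ⟨a, ha⟩ := h.exists_relFormula_apply₂ (t₁ := fun e => t₁ (e ∘ Nat.succ))
    (t₂ := fun e => t₂ (e ∘ Nat.succ)) (a₁ := a₁.rename (lift Nat.succ))
    (a₂ := a₂.rename (lift Nat.succ)) (Q := fun u w e => g u w = π (e 0))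
    (fun e x => by rw [sat_rename, econs_comp_lift, h₁])
    (fun e x => by rw [sat_rename, econs_comp_lift, h₂]) hb
  exact ⟨a, fun e x => ha (econs x e)⟩

theorem exists_relFormula_term (h : Presents R π) {α : Type*} (t : arith.Term α) (ρ : α → ℕ) :
    ∃ a : RelFormula, ∀ (e : ℕ → D) (x : D),
      a.sat R (econs x e) ↔ t.realize (fun i => π (e (ρ i))) = π x := by
  induction t with
  | var i => exact ⟨fEq (ρ i + 1) 0, fun e x => (h.eq_iff _ _).symm⟩
  | func f ts ih =>
    cases f with
    | zero =>
      refine ⟨fZero 0, fun e x => (h.zero_iff x).symm.trans (iff_of_eq (congrArg (· = π x) ?_))⟩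
      exact congrArg (Structure.funMap (L := arith) arithFunc.zero) (Subsingleton.elim _ _)
    | one =>
      refine ⟨fOne 0, fun e x => (h.one_iff x).symm.trans (iff_of_eq (congrArg (· = π x) ?_))⟩
      exact congrArg (Structure.funMap (L := arith) arithFunc.one) (Subsingleton.elim _ _)
    | add =>
      obtain ⟨a, ha⟩ := h.exists_relFormula_binop (g := addM) (b := fAdd 0 1 2)
        (fun e x y => (h.add_iff x y (e 0)).symm) (ih 0) (ih 1)
      refine ⟨a, fun e x => (ha e x).trans (iff_of_eq (congrArg (· = π x) ?_))⟩
      refine congrArg (Structure.funMap (L := arith) arithFunc.add) (funext fun i => ?_)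
      fin_cases i <;> rfl
    | mul =>
      obtain ⟨a, ha⟩ := h.exists_relFormula_binop (g := mulM) (b := fMul 0 1 2)
        (fun e x y => (h.mul_iff x y (e 0)).symm) (ih 0) (ih 1)
      refine ⟨a, fun e x => (ha e x).trans (iff_of_eq (congrArg (· = π x) ?_))⟩
      refine congrArg (Structure.funMap (L := arith) arithFunc.mul) (funext fun i => ?_)
      fin_cases i <;> rfl

theorem exists_relFormula_boundedFormula (h : Presents R π) {α : Type*} {n : ℕ}
    (φ : arith.BoundedFormula α n) (ρ : α ⊕ Fin n → ℕ) :
    ∃ a : RelFormula, ∀ e : ℕ → D,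
      a.sat R e ↔ φ.Realize (fun i => π (e (ρ (.inl i)))) (fun i => π (e (ρ (.inr i)))) := by
  have elim_comp : ∀ {n : ℕ} (ρ : α ⊕ Fin n → ℕ) (e : ℕ → D),
      Sum.elim (fun i => π (e (ρ (.inl i)))) (fun i => π (e (ρ (.inr i)))) =
        fun i => π (e (ρ i)) :=
    fun ρ e => funext fun i => by cases i <;> rfl
  induction φ with
  | falsum => exact ⟨neg (conj []), fun e => by simp [sat_neg, sat_conj, BoundedFormula.Realize]⟩
  | equal t₁ t₂ =>
    obtain ⟨a₁, h₁⟩ := h.exists_relFormula_term t₁ ρ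
    obtain ⟨a₂, h₂⟩ := h.exists_relFormula_term t₂ ρ
    simp only [BoundedFormula.Realize, elim_comp]
    exact h.exists_relFormula_apply₂ (Q := fun u w _ => u = w) (b := fEq 0 1) h₁ h₂
      fun _ x y => (h.eq_iff x y).symm
  | rel r ts =>
    cases r with
    | lt =>
      obtain ⟨a₁, h₁⟩ := h.exists_relFormula_term (ts 0) ρ
      obtain ⟨a₂, h₂⟩ := h.exists_relFormula_term (ts 1) ρ
      obtain ⟨a, ha⟩ := h.exists_relFormula_apply₂ (Q := fun u w _ => ltM u w) (b := fLt 0 1) h₁ h₂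
        fun _ x y => (h.lt_iff x y).symm
      refine ⟨a, fun e => (ha e).trans (iff_of_eq ?_)⟩
      rw [← elim_comp]
      refine congrArg (Structure.RelMap (L := arith) arithRel.lt) (funext fun i => ?_)
      fin_cases i <;> rfl
  | imp φ ψ ihφ ihψ =>
    obtain ⟨a, ha⟩ := ihφ ρ
    obtain ⟨b, hb⟩ := ihψ ρ
    exact ⟨imp a b, fun e => by rw [BoundedFormula.Realize, sat_imp, ha, hb]⟩
  | all φ ih =>
    obtain ⟨a, ha⟩ := ih (Sum.elim (fun i => ρ (.inl i) + 1)
      (Fin.snoc (α := fun _ => ℕ) (fun i => ρ (.inr i) + 1) 0))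
    refine ⟨RelFormula.all a, fun e => ?_⟩
    rw [BoundedFormula.Realize, sat_all, h.surjective.forall]
    refine forall_congr' fun x => (ha _).trans (iff_of_eq (congrArg _ (funext fun i => ?_)))
    induction i using Fin.lastCases <;> simp [econs]

theorem exists_relFormula_definable₁ (h : Presents R π) {s : Set M}
    (hs : Set.Definable₁ (Set.univ : Set M) arith s) :
    ∃ (a : RelFormula) (e : ℕ → D), ∀ x, a.sat R (econs x e) ↔ π x ∈ s := by
  obtain ⟨A, -, hA⟩ := Set.definable_iff_finitely_definable.1 hs
  obtain ⟨φ, hφ⟩ := Set.definable_iff_exists_formula_sum.1 hA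
  obtain ⟨g, hg⟩ := exists_injective_nat A
  obtain ⟨a, ha⟩ := h.exists_relFormula_boundedFormula φ
    (Sum.elim (Sum.elim (fun c => g c + 1) fun _ => 0) Fin.elim0)
  let f : M → D := Function.surjInv h.surjective
  refine ⟨a, Function.extend g (fun c => f c) fun _ => f (zeroM M), fun x => ?_⟩
  have hx : π x ∈ s ↔ (fun _ => π x) ∈ {y : Fin 1 → M | y 0 ∈ s} := Iff.rfl
  rw [hx, hφ, ha]
  refine iff_of_eq (congrArg₂ (BoundedFormula.Realize φ)
    (funext (Sum.rec (fun _ => ?_) fun _ => ?_)) (Subsingleton.elim _ _))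
  · simp [econs, hg.extend_apply, f, Function.surjInv_eq]
  · simp [econs]

theorem mem_of_definable₁ (h : Presents R π) (hR : IsPAPresentation R) {s : Set M}
    (hs : Set.Definable₁ (Set.univ : Set M) arith s) (zero : zeroM M ∈ s)
    (succ : ∀ x ∈ s, addM x (oneM M) ∈ s) (x : M) : x ∈ s := by
  obtain ⟨a, e, ha⟩ := h.exists_relFormula_definable₁ hs
  by_contra hx
  obtain ⟨d, rfl⟩ := h.surjective x
  obtain ⟨m, hm, hmin⟩ := (sat_lnp R a e).1 (hR.sat_lnp a e) ⟨d, by rwa [ha]⟩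
  rw [ha] at hm
  rcases hR.eq_zero_or_eq_succ m with hz | ⟨y, o, ho, hy⟩
  · exact hm ((h.zero_iff m).2 hz ▸ zero)
  · have hlt : rLt R y m := hR.lt_succ o y y m ho hy (.inr (hR.eq_refl y))
    have hsucc : addM (π y) (oneM M) = π m := by rw [(h.one_iff o).2 ho, (h.add_iff y o m).2 hy]
    exact hm (hsucc ▸ succ _ ((ha y).1 (hmin y hlt)))

theorem isPAModel (h : Presents R π) (hR : IsPAPresentation R) : IsPAModel M := by
  obtain ⟨o, ho⟩ := hR.exists_one
  obtain ⟨z, hz⟩ := hR.exists_zero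
  refine ⟨?_, ?_, ?_, ?_, ?_, ?_, ?_, ?_, fun s => h.mem_of_definable₁ hR⟩ <;>
    simp only [(h.one_iff o).2 ho, (h.zero_iff z).2 hz, h.surjective.forall] <;> intro x
  · exact (h.add_iff _ _ _).2 (hR.add_zero _ _ hz)
  · intro y
    obtain ⟨y', hy'⟩ := hR.exists_add y o
    obtain ⟨w, hw⟩ := hR.exists_add x y
    obtain ⟨w', hw'⟩ := hR.exists_add w o
    rw [(h.add_iff _ _ _).2 hy', (h.add_iff _ _ _).2 hw, (h.add_iff _ _ _).2 hw', h.add_iff]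
    exact hR.add_succ _ _ _ _ _ _ ho hy' hw hw'
  · exact (h.mul_iff _ _ _).2 (hR.mul_zero _ _ hz)
  · intro y
    obtain ⟨y', hy'⟩ := hR.exists_add y o
    obtain ⟨w, hw⟩ := hR.exists_mul x y
    obtain ⟨w', hw'⟩ := hR.exists_add w x
    rw [(h.add_iff _ _ _).2 hy', (h.mul_iff _ _ _).2 hw, (h.add_iff _ _ _).2 hw', h.mul_iff]
    exact hR.mul_succ _ _ _ _ _ _ ho hy' hw hw'
  · rw [h.lt_iff]
    exact hR.not_lt_zero _ _ hz
  · intro y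
    obtain ⟨y', hy'⟩ := hR.exists_add y o
    rw [(h.add_iff _ _ _).2 hy', h.lt_iff, h.lt_iff, h.eq_iff]
    exact ⟨hR.lt_or_eq_of_lt_succ _ _ _ _ ho hy', hR.lt_succ _ _ _ _ ho hy'⟩
  · obtain ⟨y, hy⟩ := hR.exists_add x o
    rw [(h.add_iff _ _ _).2 hy, ne_comm, ← (h.zero_iff z).2 hz, Ne, h.zero_iff]
    exact hR.succ_ne_zero _ _ _ ho hy
  · intro y hxy
    obtain ⟨w, hw⟩ := hR.exists_add y o
    rw [(h.add_iff _ _ _).2 hw, h.add_iff] at hxy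
    exact (h.eq_iff _ _).2 (hR.succ_inj _ _ _ _ ho hxy hw)

section PAModel

open PAModel

variable [PAModel M]

theorem eq_two_mul_iff (h : Presents R π) (x y : D) : π x = 2 * π y ↔ rBit R false x y := by
  rw [two_mul, eq_comm]
  exact h.add_iff y y x

theorem eq_two_mul_add_one_iff (h : Presents R π) (x y : D) :
    π x = 2 * π y + 1 ↔ rBit R true x y := by
  have hadd : ∀ x y z, π x + π y = π z ↔ rAdd R x y z := h.add_iff
  have hone : ∀ x, 1 = π x ↔ rOne R x := h.one_iff
  simp only [rBit, ← hadd, ← hone]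
  constructor
  · intro hx
    obtain ⟨w, hw⟩ := h.surjective (π y + π y)
    obtain ⟨o, ho⟩ := h.surjective 1
    exact ⟨w, o, ho.symm, hw.symm, by rw [hw, ho, hx, two_mul]⟩
  · rintro ⟨w, o, ho, hw, hx⟩
    rw [← hx, ← hw, ← ho, two_mul]

theorem digitStep_iff (h : Presents R π) (A : Set ℕ) (i : ℕ) (x y : D) :
    DigitStep (i ∈ A) (π x) (π y) ↔ rBit R (chi A i) x y := by
  by_cases hi : i ∈ A
  · simp [DigitStep, hi, chi, h.eq_two_mul_add_one_iff]
  · simp [DigitStep, hi, chi, h.eq_two_mul_iff]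

end PAModel

end Presents

/-! ### Digit sequences in presentations -/

section DigitSeq

variable {D : Type*} {R : ℕ → D → D → D → Prop}

/-- The `i`-th term of `q` is nonzero, and the next one is its half rounded down, with the
membership of `i` in `A` as remainder. -/
def DigitSeq (R : ℕ → D → D → D → Prop) (A : Set ℕ) (q : ℕ → D) (i : ℕ) : Prop :=
  ¬ rZero R (q i) ∧ rBit R (chi A i) (q i) (q (i + 1))

theorem IsPAPresentation.paModel (hR : IsPAPresentation R) : PAModel hR.Model :=
  (hR.presents_toModel.isPAModel hR).paModel

open PAModel

theorem IsPAPresentation.exists_digitSeq (hR : IsPAPresentation R) (A : Set ℕ) (n : ℕ) :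
    ∃ q : ℕ → D, ∀ i < n, DigitSeq R A q i := by
  have := hR.paModel
  have h := hR.presents_toModel
  obtain ⟨s, hne, hs⟩ := exists_digits n A
  choose q hq using fun i => h.surjective (s i : hR.Model)
  refine ⟨q, fun i hi => ⟨?_, ?_⟩⟩
  · rw [← h.zero_iff, hq]
    exact (Nat.cast_ne_zero.2 (hne i)).symm
  · rw [← h.digitStep_iff, hq, hq, digitStep_cast]
    exact hs i hi

theorem PAModel.exists_eq_two_mul_or {M : Type*} [arith.Structure M] [PAModel M] (x : M) :
    ∃ y, x = 2 * y ∨ x = 2 * y + 1 := by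
  simp only [two_mul]
  refine PAModel.induction (fun x : M => ∃ y, x = y + y ∨ x = y + y + 1) ⟨0, .inl (zero_add 0).symm⟩
    ?_ x
  rintro _ ⟨y, rfl | rfl⟩
  · exact ⟨y, .inr rfl⟩
  · exact ⟨y + 1, .inl (by ring)⟩

theorem IsPAPresentation.exists_rBit (hR : IsPAPresentation R) (x : D) :
    ∃ y, rBit R false x y ∨ rBit R true x y := by
  have := hR.paModel
  have h := hR.presents_toModel
  obtain ⟨y, hy⟩ := exists_eq_two_mul_or (hR.toModel x)
  obtain ⟨y, rfl⟩ := h.surjective y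
  rw [h.eq_two_mul_iff, h.eq_two_mul_add_one_iff] at hy
  exact ⟨y, hy⟩

end DigitSeq

open Encodable

/-! ### Henkin clauses -/

/-- The propositional variable asserting the formula with code `a` at the elements `e`. -/
def pos (a : ℕ) (e : List ℕ) : ℕ := Nat.pair a (encode e)

theorem exists_pos_code_eq (p : ℕ) : ∃ (a : RelFormula) (e : List ℕ), pos a.code e = p := by
  obtain ⟨a, ha⟩ := code_surjective p.unpair.1
  exact ⟨a, Denumerable.ofNat (List ℕ) p.unpair.2, by simp [pos, ha]⟩

/-- The environment that assigns the entries of `e` to the variables, and `0` beyond its length. -/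
def env (e : List ℕ) (i : ℕ) : ℕ := e.getD i 0

theorem env_cons (x : ℕ) (e : List ℕ) : env (x :: e) = econs x (env e) := by
  funext i
  cases i <;> simp [env, econs]

/-- The `i`-th constant of stage `k`. Elements are natural numbers; those of the form `Nat.pair k n`
are introduced at stage `k`, as constants for even `n` and as witnesses for odd `n`. -/
def cst (k i : ℕ) : ℕ := Nat.pair k (2 * i)

/-- The witness of stage `k` for the formula with code `a` at the parameters `e`: its least
counterexample, if there is one. -/
def wit (k a : ℕ) (e : List ℕ) : ℕ := Nat.pair k (2 * pos a e + 1)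

/-- The stage at which an element is introduced. -/
def rank (d : ℕ) : ℕ := d.unpair.1

@[simp] theorem rank_cst (k i : ℕ) : rank (cst k i) = k := by simp [rank, cst]

@[simp] theorem rank_wit (k a : ℕ) (e : List ℕ) : rank (wit k a e) = k := by simp [rank, wit]

/-- The clauses of stage `k` about formulas with codes `a` and `b`, a list `e` and an element `x`:
the first three say that truth commutes with `nand`, the next two that the witness decides the
universal quantifier, the sixth that the witness is least, and the last two that truth of an atomic
formula depends only on the elements it mentions. For lack of letters, the indices of the atomic
formula are `a`, `b` and the components of `x`. -/
def clauseTable (k a b : ℕ) (e : List ℕ) (x : ℕ) : List (List (ℕ × Bool)) :=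
  [ [(pos (nandCode a b) e, true), (pos a e, true)],
    [(pos (nandCode a b) e, true), (pos b e, true)],
    [(pos (nandCode a b) e, false), (pos a e, false), (pos b e, false)],
    [(pos (allCode a) e, false), (pos a (x :: e), true)],
    [(pos a (wit k a e :: e), false), (pos (allCode a) e, true)],
    [(pos (atomCode 1 0 1 2) [x, wit k a e, wit k a e], false), (pos a (x :: e), true)],
    [(pos (atomCode a b x.unpair.1 x.unpair.2) e, false),
      (pos (atomCode a 0 1 2) [env e b, env e x.unpair.1, env e x.unpair.2], true)],
    [(pos (atomCode a 0 1 2) [env e b, env e x.unpair.1, env e x.unpair.2], false),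
      (pos (atomCode a b x.unpair.1 x.unpair.2) e, true)] ]

/-- The clause of `clauseTable` with number `q.1`, about the other components of `q`; beyond its
length, the axioms of `IsArithPresentation`. -/
def clauseOf (k : ℕ) (q : ℕ × ℕ × ℕ × List ℕ × ℕ) : List (ℕ × Bool) :=
  (clauseTable k q.2.1 q.2.2.1 q.2.2.2.1 q.2.2.2.2).getD q.1
    [(pos (conj arithAxioms).code [], true)]

/-- The `n`-th clause of stage `k`. -/
def clause (k n : ℕ) : List (ℕ × Bool) := clauseOf k (Denumerable.ofNat _ n)

section Primrec

variable {α : Type*} [Primcodable α]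

theorem primrec_cons {β : Type*} [Primcodable β] {f : α → β} {g : α → List β} (hf : Primrec f)
    (hg : Primrec g) : Primrec fun x => f x :: g x :=
  Primrec.list_cons.comp hf hg

theorem primrec_pair {β : Type*} [Primcodable β] {f g : α → β} (hf : Primrec f)
    (hg : Primrec g) : Primrec fun x => [f x, g x] :=
  primrec_cons hf (primrec_cons hg (Primrec.const []))

theorem primrec_triple {β : Type*} [Primcodable β] {f g h : α → β} (hf : Primrec f)
    (hg : Primrec g) (hh : Primrec h) : Primrec fun x => [f x, g x, h x] :=
  primrec_cons hf (primrec_pair hg hh)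

theorem primrec_pos {f : α → ℕ} {g : α → List ℕ} (hf : Primrec f) (hg : Primrec g) :
    Primrec fun x => pos (f x) (g x) :=
  Primrec₂.natPair.comp hf (Primrec.encode.comp hg)

theorem primrec_literal (b : Bool) {f : α → ℕ} {g : α → List ℕ} (hf : Primrec f)
    (hg : Primrec g) : Primrec fun x => (pos (f x) (g x), b) :=
  (primrec_pos hf hg).pair (Primrec.const b)

theorem primrec_env {f : α → List ℕ} {g : α → ℕ} (hf : Primrec f) (hg : Primrec g) :
    Primrec fun x => env (f x) (g x) :=
  (Primrec.list_getD 0).comp hf hg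

theorem primrec_cst (k : ℕ) {f : α → ℕ} (hf : Primrec f) : Primrec fun x => cst k (f x) :=
  Primrec₂.natPair.comp (Primrec.const k) (Primrec.nat_double.comp hf)

theorem primrec_wit (k : ℕ) {f : α → ℕ} {g : α → List ℕ} (hf : Primrec f) (hg : Primrec g) :
    Primrec fun x => wit k (f x) (g x) :=
  Primrec₂.natPair.comp (Primrec.const k) (Primrec.nat_double_succ.comp (primrec_pos hf hg))

theorem primrec_atomCode {r i j l : α → ℕ} (hr : Primrec r) (hi : Primrec i) (hj : Primrec j)
    (hl : Primrec l) : Primrec fun x => atomCode (r x) (i x) (j x) (l x) :=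
  Primrec.nat_mul.comp (Primrec.const 3) (Primrec₂.natPair.comp hr
    (Primrec₂.natPair.comp hi (Primrec₂.natPair.comp hj hl)))

theorem primrec_nandCode {f g : α → ℕ} (hf : Primrec f) (hg : Primrec g) :
    Primrec fun x => nandCode (f x) (g x) :=
  Primrec.succ.comp (Primrec.nat_mul.comp (Primrec.const 3) (Primrec₂.natPair.comp hf hg))

theorem primrec_allCode {f : α → ℕ} (hf : Primrec f) : Primrec fun x => allCode (f x) :=
  Primrec.succ.comp (Primrec.succ.comp (Primrec.nat_mul.comp (Primrec.const 3) hf))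

theorem primrec_clauseTable (k : ℕ) {a b x : α → ℕ} {e : α → List ℕ} (ha : Primrec a)
    (hb : Primrec b) (he : Primrec e) (hx : Primrec x) :
    Primrec fun y => clauseTable k (a y) (b y) (e y) (x y) := by
  have hx₁ := Primrec.fst.comp (Primrec.unpair.comp hx)
  have hx₂ := Primrec.snd.comp (Primrec.unpair.comp hx)
  have hwit := primrec_wit k ha he
  have hnand := primrec_nandCode ha hb
  have hall := primrec_allCode ha
  have hatom := primrec_atomCode ha hb hx₁ hx₂
  have hatom' := primrec_atomCode ha (Primrec.const 0) (Primrec.const 1) (Primrec.const 2)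
  have hlt := Primrec.const (α := α) (atomCode 1 0 1 2)
  have hxe := primrec_cons hx he
  have hxw := primrec_triple hx hwit hwit
  have hval := primrec_triple (primrec_env he hb) (primrec_env he hx₁) (primrec_env he hx₂)
  refine primrec_cons ?_ (primrec_cons ?_ (primrec_cons ?_ (primrec_cons ?_ (primrec_cons ?_
    (primrec_triple ?_ ?_ ?_)))))
  · exact primrec_pair (primrec_literal true hnand he) (primrec_literal true ha he)
  · exact primrec_pair (primrec_literal true hnand he) (primrec_literal true hb he)
  · exact primrec_triple (primrec_literal false hnand he) (primrec_literal false ha he)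
      (primrec_literal false hb he)
  · exact primrec_pair (primrec_literal false hall he) (primrec_literal true ha hxe)
  · exact primrec_pair (primrec_literal false ha (primrec_cons hwit he))
      (primrec_literal true hall he)
  · exact primrec_pair (primrec_literal false hlt hxw) (primrec_literal true ha hxe)
  · exact primrec_pair (primrec_literal false hatom he) (primrec_literal true hatom' hval)
  · exact primrec_pair (primrec_literal false hatom' hval) (primrec_literal true hatom he)

theorem primrec_clause (k : ℕ) : Primrec (clause k) := by
  have ha : Primrec fun q : ℕ × ℕ × ℕ × List ℕ × ℕ => q.2.1 := Primrec.fst.comp Primrec.snd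
  have hb : Primrec fun q : ℕ × ℕ × ℕ × List ℕ × ℕ => q.2.2 := Primrec.snd.comp Primrec.snd
  have he : Primrec fun q : ℕ × ℕ × ℕ × List ℕ × ℕ => q.2.2.2 := Primrec.snd.comp hb
  have htable := primrec_clauseTable k ha (Primrec.fst.comp hb) (Primrec.fst.comp he)
    (Primrec.snd.comp he)
  exact ((Primrec.list_getD _).comp htable Primrec.fst).comp (Primrec.ofNat _)

end Primrec

/-! ### Truth predicates -/

/-- Tarski's conditions on a truth predicate for structures on `ℕ`, where `T a e` stands for the
truth of `a` at the elements `e`. -/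
structure IsTarski (T : RelFormula → List ℕ → Prop) : Prop where
  nand_iff : ∀ a b e, T (nand a b) e ↔ ¬ (T a e ∧ T b e)
  all_iff : ∀ a e, T (all a) e ↔ ∀ x, T a (x :: e)
  atom_iff : ∀ r i j l e, T (atom r i j l) e ↔ T (atom r 0 1 2) [env e i, env e j, env e l]

/-- The relations read off a truth predicate. -/
def relOf (T : RelFormula → List ℕ → Prop) (r x y z : ℕ) : Prop := T (atom r 0 1 2) [x, y, z]

theorem IsTarski.iff_sat {T : RelFormula → List ℕ → Prop} (hT : IsTarski T) (a : RelFormula)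
    (e : List ℕ) : T a e ↔ a.sat (relOf T) (env e) := by
  induction a generalizing e with
  | atom r i j l => exact hT.atom_iff r i j l e
  | nand a b iha ihb => rw [hT.nand_iff, sat_nand, iha, ihb]
  | all a ih =>
    rw [hT.all_iff, sat_all]
    exact forall_congr' fun x => by rw [ih, env_cons]

theorem forall_sat_iff_env {R : ℕ → ℕ → ℕ → ℕ → Prop} (a : RelFormula) :
    (∀ e, a.sat R e) ↔ ∀ e : List ℕ, a.sat R (env e) := by
  refine ⟨fun h e => h _, fun h e => ?_⟩
  refine (sat_congr R a fun i hi => ?_).1 (h ((List.range a.varBound).map e))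
  simp [env, List.getD, hi]

/-- The conditions on a truth predicate imposed by the clauses of stage `k`. The witnesses of the
stage are least counterexamples, which makes the least number principle hold. -/
structure IsHenkin (k : ℕ) (T : RelFormula → List ℕ → Prop) : Prop where
  nand_iff : ∀ a b e, T (nand a b) e ↔ ¬ (T a e ∧ T b e)
  of_all : ∀ a x e, T (all a) e → T a (x :: e)
  all_of_wit : ∀ a e, T a (wit k a.code e :: e) → T (all a) e
  of_lt_wit : ∀ a x e, rLt (relOf T) x (wit k a.code e) → T a (x :: e)
  atom_iff : ∀ r i j l e, T (atom r i j l) e ↔ T (atom r 0 1 2) [env e i, env e j, env e l]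
  axioms : T (conj arithAxioms) []

namespace IsHenkin

variable {k : ℕ} {T : RelFormula → List ℕ → Prop}

theorem isTarski (hT : IsHenkin k T) : IsTarski T where
  nand_iff := hT.nand_iff
  all_iff a e := ⟨fun h x => hT.of_all a x e h, fun h => hT.all_of_wit a e (h _)⟩
  atom_iff := hT.atom_iff

theorem isPAPresentation (hT : IsHenkin k T) : IsPAPresentation (relOf T) where
  toIsArithPresentation := (sat_conj_arithAxioms _ _).1 ((hT.isTarski.iff_sat _ _).1 hT.axioms)
  sat_lnp a := by
    have hsat : ∀ x e, a.sat (relOf T) (econs x (env e)) ↔ T a (x :: e) := fun x e => by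
      rw [hT.isTarski.iff_sat, env_cons]
    refine (forall_sat_iff_env _).2 fun e => (sat_lnp _ a (env e)).2 ?_
    simp only [hsat]
    rintro ⟨x, hx⟩
    exact ⟨wit k a.code e, fun h => hx (hT.of_all a x e (hT.all_of_wit a e h)),
      fun y hy => hT.of_lt_wit a y e hy⟩

end IsHenkin

/-- The truth predicate given by an assignment. -/
def truth (v : ℕ → Bool) (a : RelFormula) (e : List ℕ) : Prop := v (pos a.code e) = true

theorem satisfies_nil (v : ℕ → Bool) : Satisfies v [] ↔ False := by simp [Satisfies]

theorem satisfies_cons (v : ℕ → Bool) (p : ℕ) (b : Bool) (c : List (ℕ × Bool)) :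
    Satisfies v ((p, b) :: c) ↔ v p = b ∨ Satisfies v c := by
  simp [Satisfies]

theorem forall_getD_iff {α : Type*} {p : α → Prop} {l : List α} {d : α} :
    (∀ i, p (l.getD i d)) ↔ (∀ x ∈ l, p x) ∧ p d := by
  induction l with
  | nil => simp
  | cons x l ih =>
    rw [← Nat.and_forall_add_one]
    simp only [List.getD_cons_zero, List.getD_cons_succ, ih, List.forall_mem_cons, and_assoc]

theorem forall_satisfies_clause_iff {k : ℕ} {v : ℕ → Bool} :
    (∀ n, Satisfies v (clause k n)) ↔ ∀ a b e x,
      (∀ c ∈ clauseTable k a b e x, Satisfies v c) ∧ truth v (conj arithAxioms) [] := by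
  have hcode : (∀ n, Satisfies v (clause k n)) ↔ ∀ q, Satisfies v (clauseOf k q) :=
    ⟨fun h q => by simpa only [clause, Denumerable.ofNat_encode] using h (encode q),
      fun h n => h _⟩
  have hdefault : Satisfies v [(pos (conj arithAxioms).code [], true)] ↔
      truth v (conj arithAxioms) [] := by
    rw [satisfies_cons, satisfies_nil, or_false, truth]
  simp only [hcode, Prod.forall, clauseOf, ← hdefault, ← forall_getD_iff]
  exact ⟨fun h a b e x t => h t a b e x, fun h t a b e x => h a b e x t⟩

theorem forall_satisfies_clause_iff_isHenkin {k : ℕ} {v : ℕ → Bool} :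
    (∀ n, Satisfies v (clause k n)) ↔ IsHenkin k (truth v) := by
  rw [forall_satisfies_clause_iff]
  simp only [clauseTable, List.forall_mem_cons, satisfies_cons, satisfies_nil, or_false,
    List.not_mem_nil, IsEmpty.forall_iff, implies_true, and_true, ← Bool.not_eq_true,
    ← imp_iff_not_or]
  constructor
  · intro h
    refine ⟨fun a b e => ?_, fun a x e => ?_, fun a e => ?_, fun a x e => ?_, fun r i j l e => ?_,
      (h 0 0 [] 0).2⟩
    · obtain ⟨⟨ha, hb, hab, -⟩, -⟩ := h a.code b.code e 0
      exact ⟨fun hn hT => hab hn hT.1 hT.2,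
        fun hT => by_contra fun hn => hT ⟨ha.resolve_left hn, hb.resolve_left hn⟩⟩
    · obtain ⟨⟨-, -, -, hall, -⟩, -⟩ := h a.code 0 e x
      exact hall
    · obtain ⟨⟨-, -, -, -, hwit, -⟩, -⟩ := h a.code 0 e 0
      exact hwit
    · obtain ⟨⟨-, -, -, -, -, hlt, -⟩, -⟩ := h a.code 0 e x
      exact hlt
    · obtain ⟨⟨-, -, -, -, -, -, hatom⟩, -⟩ := h r i e (Nat.pair j l)
      rw [Nat.unpair_pair] at hatom
      exact iff_def.2 hatom
  · intro hT a b e x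
    obtain ⟨a, rfl⟩ := code_surjective a
    obtain ⟨b, rfl⟩ := code_surjective b
    have hnand := hT.nand_iff a b e
    have hatom := hT.atom_iff a.code b.code x.unpair.1 x.unpair.2 e
    exact ⟨⟨or_iff_not_imp_left.2 fun hn => by_contra fun ha => hn (hnand.2 fun h => ha h.1),
      or_iff_not_imp_left.2 fun hn => by_contra fun hb => hn (hnand.2 fun h => hb h.2),
      fun hn ha hb => hnand.1 hn ⟨ha, hb⟩, hT.of_all a x e, hT.all_of_wit a e,
      hT.of_lt_wit a x e, hatom.1, hatom.2⟩, hT.axioms⟩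

/-! ### Interpretation of the constants and witnesses -/

section Eval

variable {D : Type*}

theorem env_le_encode (e : List ℕ) (i : ℕ) : env e i ≤ encode e := by
  induction e generalizing i with
  | nil => exact Nat.zero_le _
  | cons x e ih =>
    rw [env_cons, encode_list_cons, encode_nat]
    cases i with
    | zero => exact (Nat.left_le_pair _ _).trans (Nat.le_succ _)
    | succ i => exact (ih i).trans ((Nat.right_le_pair _ _).trans (Nat.le_succ _))

theorem env_lt_wit (k a : ℕ) (e : List ℕ) (i : ℕ) : env e i < wit k a e :=
  calc env e i ≤ encode e := env_le_encode e i
    _ ≤ pos a e := Nat.right_le_pair _ _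
    _ < 2 * pos a e + 1 := by omega
    _ ≤ wit k a e := Nat.right_le_pair _ _

/-- The interpretation of the elements that uses `q` for the constants of stage `k`, the function
`w` of the formula and the interpreted parameters for the witnesses of stage `k`, and `h` for all
other elements. The comparison of elements only serves to make the recursion well-founded. -/
noncomputable def interp (k : ℕ) (h q : ℕ → D) (w : RelFormula → (ℕ → D) → D) (d : ℕ) : D :=
  if rank d = k then
    if d.unpair.2.bodd then
      w (ofCode d.unpair.2.div2.unpair.1) fun i =>
        let c := env (Denumerable.ofNat (List ℕ) d.unpair.2.div2.unpair.2) i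
        if _ : c < d then interp k h q w c else h c
    else q d.unpair.2.div2
  else h d
  termination_by d

theorem exists_interp (k : ℕ) (h q : ℕ → D) (w : RelFormula → (ℕ → D) → D) :
    ∃ η : ℕ → D, (∀ d, rank d ≠ k → η d = h d) ∧ (∀ i, η (cst k i) = q i) ∧
      ∀ a e, η (wit k a.code e) = w a (η ∘ env e) := by
  refine ⟨interp k h q w, fun d hd => ?_, fun i => ?_, fun a e => ?_⟩
  · rw [interp, if_neg hd]
  · rw [interp, if_pos (rank_cst k i)]
    simp [cst]
  · rw [interp, if_pos (rank_wit k _ e)]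
    have hsnd : (wit k a.code e).unpair.2 = 2 * pos a.code e + 1 := by simp [wit]
    have hdiv : (2 * pos a.code e + 1).div2 = pos a.code e := Nat.div2_bit1 _
    have hodd : (2 * pos a.code e + 1).bodd = true := by simp
    rw [hsnd, if_pos hodd, hdiv]
    simp only [pos, Nat.unpair_pair, Denumerable.ofNat_encode, ofCode_code, env_lt_wit, dif_pos]
    rfl

end Eval

section LeastCounterexample

variable {D : Type*} {R : ℕ → D → D → D → Prop}

/-- If there is a counterexample to `a` at `e`, then `w` is a least one. -/
def IsLeastCex (R : ℕ → D → D → D → Prop) (a : RelFormula) (e : ℕ → D) (w : D) : Prop :=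
  (a.sat R (econs w e) → ∀ x, a.sat R (econs x e)) ∧ ∀ y, rLt R y w → a.sat R (econs y e)

theorem IsPAPresentation.exists_isLeastCex (hR : IsPAPresentation R) (a : RelFormula)
    (e : ℕ → D) : ∃ w, IsLeastCex R a e w := by
  by_cases hall : ∀ x, a.sat R (econs x e)
  · obtain ⟨w, -⟩ := hR.exists_zero
    exact ⟨w, fun _ => hall, fun y _ => hall y⟩
  · obtain ⟨w, hw, hmin⟩ := (Arith.sat_lnp R a e).1 (hR.sat_lnp a e) (not_forall.1 hall)
    exact ⟨w, fun h => (hw h).elim, hmin⟩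

theorem isHenkin_sat {k : ℕ} {η : ℕ → D} (hR : IsArithPresentation R)
    (hη : ∀ a e, IsLeastCex R a (η ∘ env e) (η (wit k a.code e))) :
    IsHenkin k fun a e => a.sat R (η ∘ env e) := by
  have hcons : ∀ x e, η ∘ env (x :: e) = econs (η x) (η ∘ env e) := fun x e => by
    rw [env_cons]
    funext i
    cases i <;> rfl
  refine ⟨fun a b e => Iff.rfl, fun a x e h => ?_, fun a e h => ?_, fun a x e h => ?_,
    fun r i j l e => Iff.rfl, (sat_conj_arithAxioms R _).2 hR⟩
  · rw [hcons]
    exact h _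
  · rw [hcons] at h
    exact (hη a e).1 h
  · rw [hcons]
    exact (hη a e).2 _ h

theorem exists_truth_eq (T : RelFormula → List ℕ → Prop) : ∃ v, truth v = T := by
  classical
  refine ⟨fun p => decide (T (ofCode p.unpair.1) (Denumerable.ofNat (List ℕ) p.unpair.2)), ?_⟩
  funext a e
  simp [truth, pos]

end LeastCounterexample

/-! ### Unit clauses of a stage -/

section Units

theorem meetsUnit_union {v : ℕ → Bool} {Z Z' : Set ℕ} {p : ℕ} :
    MeetsUnit v (Z ∪ Z') p ↔ MeetsUnit v Z p ∧ MeetsUnit v Z' p := by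
  simp only [MeetsUnit, Set.mem_union, or_imp, forall_and]

/-- The unit clauses saying that the constants of stage `k` form a digit sequence of `A`, with the
clause `p, b` encoded by `Nat.bit b p` as in `MeetsUnit`. -/
def digitUnits (k : ℕ) (A : Set ℕ) : Set ℕ :=
  {m | ∃ i, m = Nat.bit true (pos (fBit (chi A i) 0 1).code [cst k i, cst k (i + 1)]) ∨
    m = Nat.bit false (pos (fZero 0).code [cst k i])}

theorem charFn_beq_one (X : Set ℕ) (n : ℕ) : (charFn X n == 1) = chi X n := by
  by_cases hn : n ∈ X <;> simp [charFn, chi, hn]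

theorem mem_digitUnits_iff (k : ℕ) (A : Set ℕ) (m : ℕ) :
    let i := (env (Denumerable.ofNat (List ℕ) m.div2.unpair.2) 0).unpair.2.div2
    m ∈ digitUnits k A ↔
      m = Nat.bit true (pos (fBit (chi A i) 0 1).code [cst k i, cst k (i + 1)]) ∨
        m = Nat.bit false (pos (fZero 0).code [cst k i]) := by
  refine ⟨?_, fun h => ⟨_, h⟩⟩
  rintro ⟨i, rfl | rfl⟩ <;> simp [pos, env, cst]

theorem turingLE_digitUnits (k : ℕ) (A : Set ℕ) : TuringLE (digitUnits k A) A := by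
  let idx : ℕ → ℕ := fun m => (env (Denumerable.ofNat (List ℕ) m.div2.unpair.2) 0).unpair.2.div2
  have hidx : Primrec idx := Primrec.nat_div2.comp (Primrec.snd.comp (Primrec.unpair.comp
    (primrec_env ((Primrec.ofNat (List ℕ)).comp (Primrec.snd.comp
      (Primrec.unpair.comp Primrec.nat_div2))) (Primrec.const 0))))
  have hcst : Primrec fun x : ℕ × ℕ => cst k (idx x.1) := primrec_cst k (hidx.comp Primrec.fst)
  have hcst' : Primrec fun x : ℕ × ℕ => cst k (idx x.1 + 1) :=
    primrec_cst k (Primrec.succ.comp (hidx.comp Primrec.fst))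
  have hcode : Primrec fun x : ℕ × ℕ => (fBit (x.2 == 1) 0 1).code :=
    (Primrec.dom_bool fun b => (fBit b 0 1).code).comp
      (Primrec.beq.comp Primrec.snd (Primrec.const 1))
  have hbit : Primrec fun x : ℕ × ℕ =>
      Nat.bit true (pos (fBit (x.2 == 1) 0 1).code [cst k (idx x.1), cst k (idx x.1 + 1)]) :=
    primrec₂_bit.comp (Primrec.const true) (primrec_pos hcode (primrec_pair hcst hcst'))
  have hzero : Primrec fun x : ℕ × ℕ => Nat.bit false (pos (fZero 0).code [cst k (idx x.1)]) :=
    primrec₂_bit.comp (Primrec.const false)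
      (primrec_pos (Primrec.const _) (primrec_cons hcst (Primrec.const [])))
  refine turingLE_of_query hidx
    (F := fun m c =>
      m = Nat.bit true (pos (fBit (c == 1) 0 1).code [cst k (idx m), cst k (idx m + 1)]) ∨
        m = Nat.bit false (pos (fZero 0).code [cst k (idx m)]))
    (PrimrecPred.or (Primrec.eq.comp Primrec.fst hbit) (Primrec.eq.comp Primrec.fst hzero))
    fun m => ?_
  rw [charFn_beq_one]
  exact mem_digitUnits_iff k A m

section MeetsUnit

variable {D : Type*} {R : ℕ → D → D → D → Prop} {η : ℕ → D} {v : ℕ → Bool} {k : ℕ} {A : Set ℕ}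

theorem le_pos_cst (k a i : ℕ) (e : List ℕ) : i ≤ pos a (cst k i :: e) :=
  calc i ≤ 2 * i := by omega
    _ ≤ cst k i := Nat.right_le_pair k (2 * i)
    _ ≤ encode (cst k i :: e) := env_le_encode (cst k i :: e) 0
    _ ≤ pos a (cst k i :: e) := Nat.right_le_pair _ _

theorem bit_eq_bit {b c : Bool} {p q : ℕ} (h : Nat.bit b p = Nat.bit c q) : b = c ∧ p = q :=
  ⟨by simpa using congrArg Nat.bodd h, by simpa using congrArg Nat.div2 h⟩

theorem meetsUnit_digitUnits (hv : ∀ a e, truth v a e ↔ a.sat R (η ∘ env e)) {p : ℕ}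
    (h : ∀ i ≤ p, DigitSeq R A (η ∘ cst k) i) : MeetsUnit v (digitUnits k A) p := by
  rintro b ⟨i, hi | hi⟩ <;> obtain ⟨rfl, rfl⟩ := bit_eq_bit hi
  · refine (hv _ _).2 ((sat_fBit R _ 0 1 _).2 ?_)
    exact (h i (le_pos_cst _ _ _ _)).2
  · refine Bool.not_eq_true _ ▸ fun hT => ?_
    exact (h i (le_pos_cst _ _ _ _)).1 ((hv _ _).1 hT)

theorem digitSeq_of_meetsUnit (hv : ∀ a e, truth v a e ↔ a.sat R (η ∘ env e))
    (h : ∀ p, MeetsUnit v (digitUnits k A) p) (i : ℕ) : DigitSeq R A (η ∘ cst k) i := by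
  constructor
  · intro hzero
    have hT : truth v (fZero 0) [cst k i] := (hv _ _).2 hzero
    exact Bool.false_ne_true ((h _ false ⟨i, .inr rfl⟩).symm.trans hT)
  · exact (sat_fBit R _ 0 1 _).1 ((hv _ _).1 (h _ true ⟨i, .inl rfl⟩))

end MeetsUnit

/-- The entries of `e` are introduced up to stage `k`. -/
def RankLe (k : ℕ) (e : List ℕ) : Prop := ∀ d ∈ e, rank d ≤ k

theorem RankLe.mono {k k' : ℕ} {e : List ℕ} (h : RankLe k e) (hk : k ≤ k') : RankLe k' e :=
  fun d hd => (h d hd).trans hk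

theorem exists_rankLe (e : List ℕ) : ∃ k, RankLe k e :=
  ⟨(e.map rank).sum, fun _ hd => List.single_le_sum (fun _ _ => Nat.zero_le _) _
    (List.mem_map_of_mem hd)⟩

theorem RankLe.rank_env {k : ℕ} {e : List ℕ} (h : RankLe k e) (i : ℕ) : rank (env e i) ≤ k := by
  rcases lt_or_ge i e.length with hi | hi
  · rw [env, List.getD_eq_getElem _ _ hi]
    exact h _ (List.getElem_mem hi)
  · rw [env, List.getD_eq_default _ _ hi]
    exact Nat.zero_le k

/-- The unit clauses saying that the truth values in `P` about elements introduced up to stage `k`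
are kept. -/
def oldUnits (k : ℕ) (P : Set ℕ) : Set ℕ :=
  {m | RankLe k (Denumerable.ofNat (List ℕ) m.div2.unpair.2) ∧ chi P m.div2 = m.bodd}

theorem turingLE_oldUnits (k : ℕ) (P : Set ℕ) : TuringLE (oldUnits k P) P := by
  have hrank : PrimrecPred fun d : ℕ => rank d ≤ k :=
    Primrec.nat_le.comp (Primrec.fst.comp Primrec.unpair) (Primrec.const k)
  have hlist : Primrec fun x : ℕ × ℕ => Denumerable.ofNat (List ℕ) x.1.div2.unpair.2 :=
    (Primrec.ofNat _).comp (Primrec.snd.comp (Primrec.unpair.comp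
      (Primrec.nat_div2.comp Primrec.fst)))
  have hchi : PrimrecPred fun x : ℕ × ℕ => (x.2 == 1) = x.1.bodd :=
    Primrec.eq.comp (Primrec.beq.comp Primrec.snd (Primrec.const 1))
      (Primrec.nat_bodd.comp Primrec.fst)
  refine turingLE_of_query Primrec.nat_div2
    (F := fun m c => RankLe k (Denumerable.ofNat (List ℕ) m.div2.unpair.2) ∧ (c == 1) = m.bodd)
    (PrimrecPred.and (hrank.forall_mem_list.comp hlist) hchi) fun m => ?_
  rw [charFn_beq_one]
  rfl

theorem meetsUnit_oldUnits_iff {v : ℕ → Bool} {k : ℕ} {P : Set ℕ} {a : RelFormula} {e : List ℕ} :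
    MeetsUnit v (oldUnits k P) (pos a.code e) ↔
      (RankLe k e → (truth v a e ↔ truth (chi P) a e)) := by
  simp only [MeetsUnit, oldUnits, Set.mem_ofPred_eq, Nat.div2_bit, Nat.bodd_bit, truth,
    ← Bool.eq_iff_iff, and_imp]
  simp only [pos, Nat.unpair_pair, Denumerable.ofNat_encode]
  exact ⟨fun h he => h _ he rfl, fun h b he hb => (h he).trans hb⟩

end Units

/-! ### Stages -/

section Stage

variable {S : Set (Set ℕ)} {A P Z : Set ℕ} {k : ℕ}

/-- `P` is a set in `S` that codes a truth predicate satisfying the clauses of stage `k`, in which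
the constants of stage `k` form a digit sequence of `A`. -/
structure IsStage (S : Set (Set ℕ)) (A : Set ℕ) (k : ℕ) (P : Set ℕ) : Prop where
  mem : P ∈ S
  isHenkin : IsHenkin k (truth (chi P))
  digitSeq : ∀ i, DigitSeq (relOf (truth (chi P))) A (cst k) i

theorem ScottSet.exists_isStage (hS : ScottSet S) {D : Type*} {R : ℕ → D → D → D → Prop}
    (hR : IsPAPresentation R) (k : ℕ) (h : ℕ → D) (hA : A ∈ S) (hZ : Z ∈ S)
    (hunit : ∀ (η : ℕ → D) (v : ℕ → Bool), (∀ d, rank d ≠ k → η d = h d) →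
      (∀ a e, truth v a e ↔ a.sat R (η ∘ env e)) → ∀ p, MeetsUnit v Z p) :
    ∃ P, IsStage S A k P ∧ ∀ p, MeetsUnit (chi P) Z p := by
  have hZA : Z ∪ digitUnits k A ∈ S :=
    hS.2.1.union_mem hZ (hS.2.1.2 A hA _ (turingLE_digitUnits k A))
  choose w hw using hR.exists_isLeastCex
  obtain ⟨P, hP, hall⟩ := hS.exists_assignment (primrec_clause k) hZA fun N => by
    obtain ⟨q, hq⟩ := hR.exists_digitSeq A N
    obtain ⟨η, hh, hcst, hwit⟩ := exists_interp k h q w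
    have hη : η ∘ cst k = q := funext hcst
    obtain ⟨v, hv⟩ := exists_truth_eq fun a e => a.sat R (η ∘ env e)
    have hv' : ∀ a e, truth v a e ↔ a.sat R (η ∘ env e) := fun a e => by rw [hv]
    have hhenkin : IsHenkin k (truth v) := by
      rw [hv]
      exact isHenkin_sat hR.toIsArithPresentation fun a e => by
        rw [hwit]
        exact hw a _
    refine ⟨v, fun n hn => ⟨forall_satisfies_clause_iff_isHenkin.2 hhenkin n,
      meetsUnit_union.2 ⟨hunit η v hh hv' n, meetsUnit_digitUnits hv' fun i hi => ?_⟩⟩⟩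
    rw [hη]
    exact hq i (hi.trans_lt hn)
  have hhenkin : IsHenkin k (truth (chi P)) :=
    forall_satisfies_clause_iff_isHenkin.1 fun n => (hall n).1
  exact ⟨P, ⟨hP, hhenkin, digitSeq_of_meetsUnit (η := id) hhenkin.isTarski.iff_sat
    fun p => (meetsUnit_union.1 (hall p).2).2⟩, fun p => (meetsUnit_union.1 (hall p).2).1⟩

theorem ScottSet.empty_mem (hS : ScottSet S) : ∅ ∈ S := by
  obtain ⟨X, hX⟩ := hS.1
  refine hS.2.1.2 X hX _ (turingLE_of_query Primrec.id (F := fun _ _ => False) ?_ fun _ => Iff.rfl)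
  exact (Primrec.eq.comp (Primrec.const 0) (Primrec.const 1)).of_eq fun _ => by simp

theorem ScottSet.exists_isStage_zero (hS : ScottSet S) (hA : A ∈ S) : ∃ P, IsStage S A 0 P := by
  obtain ⟨P, hP, -⟩ := hS.exists_isStage isPAPresentation_natR 0 id hA hS.empty_mem
    fun _ _ _ _ _ _ h => h.elim
  exact ⟨P, hP⟩

/-- The next stage interprets the old elements by themselves and so keeps the truth values about
them. -/
theorem ScottSet.exists_isStage_succ {A' : Set ℕ} (hS : ScottSet S) (hA : A ∈ S)
    (hP : IsStage S A' k P) : ∃ P', IsStage S A (k + 1) P' ∧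
      ∀ a e, RankLe k e → (truth (chi P) a e ↔ truth (chi P') a e) := by
  have hZ : oldUnits k P ∈ S := hS.2.1.2 P hP.mem _ (turingLE_oldUnits k P)
  obtain ⟨P', hP', hunit⟩ := hS.exists_isStage hP.isHenkin.isPAPresentation (k + 1) id hA hZ
    fun η v hη hv p => by
      obtain ⟨a, e, rfl⟩ := exists_pos_code_eq p
      refine meetsUnit_oldUnits_iff.2 fun he => ?_
      have henv : η ∘ env e = env e := funext fun i =>
        hη _ ((Nat.lt_succ_of_le (he.rank_env i)).ne)
      rw [hv, henv, hP.isHenkin.isTarski.iff_sat]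
  exact ⟨P', hP', fun a e he => (meetsUnit_oldUnits_iff.1 (hunit _) he).symm⟩

/-- A sequence of truth predicates, one for each stage, in which later ones agree with earlier ones
on the elements introduced before. -/
structure IsHenkinChain (T : ℕ → RelFormula → List ℕ → Prop) : Prop where
  isHenkin : ∀ k, IsHenkin k (T k)
  agree : ∀ k a e, RankLe k e → (T k a e ↔ T (k + 1) a e)

theorem ScottSet.exists_isHenkinChain (hS : ScottSet S) {A : ℕ → Set ℕ} (hA : ∀ k, A k ∈ S) :
    ∃ P : ℕ → Set ℕ, (∀ k, IsStage S (A k) k (P k)) ∧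
      IsHenkinChain fun k => truth (chi (P k)) := by
  choose next hnext hagree using fun (k : ℕ) (P : {P // IsStage S (A k) k P}) =>
    hS.exists_isStage_succ (hA (k + 1)) P.2
  obtain ⟨P₀, h₀⟩ := hS.exists_isStage_zero (hA 0)
  let P (k : ℕ) : {P // IsStage S (A k) k P} :=
    Nat.rec ⟨P₀, h₀⟩ (fun k P => ⟨next k P, hnext k P⟩) k
  exact ⟨fun k => (P k).1, fun k => (P k).2, fun k => (P k).2.isHenkin,
    fun k => hagree k (P k)⟩

end Stage

/-! ### The limit of the stages -/

/-- The limit of a chain of truth predicates: truth at the elements `e` is decided at any stage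
after the introduction of `e`. -/
def limTruth (T : ℕ → RelFormula → List ℕ → Prop) (a : RelFormula) (e : List ℕ) : Prop :=
  ∃ k, RankLe k e ∧ T k a e

namespace IsHenkinChain

variable {T : ℕ → RelFormula → List ℕ → Prop} {k : ℕ} {a : RelFormula} {e : List ℕ}

theorem agree_add (hT : IsHenkinChain T) (he : RankLe k e) (n : ℕ) : T k a e ↔ T (k + n) a e := by
  induction n with
  | zero => rfl
  | succ n ih => exact ih.trans (hT.agree _ a e (he.mono (Nat.le_add_right k n)))

theorem limTruth_iff (hT : IsHenkinChain T) (he : RankLe k e) : limTruth T a e ↔ T k a e := by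
  refine ⟨fun ⟨l, hl, h⟩ => ?_, fun h => ⟨k, he, h⟩⟩
  rw [hT.agree_add he l, add_comm, ← hT.agree_add hl k]
  exact h

theorem isTarski_limTruth (hT : IsHenkinChain T) : IsTarski (limTruth T) where
  nand_iff a b e := by
    obtain ⟨k, hk⟩ := exists_rankLe e
    simp only [hT.limTruth_iff hk, (hT.isHenkin k).nand_iff]
  all_iff a e := by
    constructor
    · intro h x
      obtain ⟨k, hk⟩ := exists_rankLe (x :: e)
      rw [hT.limTruth_iff (List.forall_mem_cons.1 hk).2] at h
      exact (hT.limTruth_iff hk).2 ((hT.isHenkin k).of_all a x e h)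
    · intro h
      obtain ⟨k, hk⟩ := exists_rankLe e
      have hwit : RankLe k (wit k a.code e :: e) :=
        List.forall_mem_cons.2 ⟨(rank_wit k _ e).le, hk⟩
      rw [hT.limTruth_iff hk]
      exact (hT.isHenkin k).all_of_wit a e ((hT.limTruth_iff hwit).1 (h _))
  atom_iff r i j l e := by
    obtain ⟨k, hk⟩ := exists_rankLe e
    have hval : RankLe k [env e i, env e j, env e l] := by
      simp only [RankLe, List.forall_mem_cons]
      exact ⟨hk.rank_env i, hk.rank_env j, hk.rank_env l, fun _ h => (List.not_mem_nil h).elim⟩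
    rw [hT.limTruth_iff hk, hT.limTruth_iff hval]
    exact (hT.isHenkin k).atom_iff r i j l e

theorem sat_limTruth_iff (hT : IsHenkinChain T) (he : RankLe k e) :
    a.sat (relOf (limTruth T)) (env e) ↔ a.sat (relOf (T k)) (env e) := by
  rw [← hT.isTarski_limTruth.iff_sat, hT.limTruth_iff he, (hT.isHenkin k).isTarski.iff_sat]

theorem isPAPresentation_limTruth (hT : IsHenkinChain T) :
    IsPAPresentation (relOf (limTruth T)) where
  toIsArithPresentation := by
    have hnil : RankLe 0 [] := by simp [RankLe]
    rw [← sat_conj_arithAxioms _ (env []), hT.sat_limTruth_iff hnil, sat_conj_arithAxioms]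
    exact (hT.isHenkin 0).isPAPresentation.toIsArithPresentation
  sat_lnp a := (forall_sat_iff_env _).2 fun e => by
    obtain ⟨k, hk⟩ := exists_rankLe e
    exact (hT.sat_limTruth_iff hk).2 ((hT.isHenkin k).isPAPresentation.sat_lnp a _)

theorem rZero_limTruth_iff (hT : IsHenkinChain T) {x : ℕ} (hx : rank x ≤ k) :
    rZero (relOf (limTruth T)) x ↔ rZero (relOf (T k)) x :=
  hT.sat_limTruth_iff (a := fZero 0) (e := [x]) (by simpa [RankLe] using hx)

theorem rBit_limTruth_iff (hT : IsHenkinChain T) {b : Bool} {x y : ℕ} (hx : rank x ≤ k)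
    (hy : rank y ≤ k) : rBit (relOf (limTruth T)) b x y ↔ rBit (relOf (T k)) b x y := by
  have he : RankLe k [x, y] := by simp [RankLe, hx, hy]
  have h := hT.sat_limTruth_iff (a := fBit b 0 1) he
  rw [sat_fBit, sat_fBit] at h
  exact h

theorem digitSeq_limTruth (hT : IsHenkinChain T) {A : Set ℕ} {i : ℕ}
    (h : DigitSeq (relOf (T k)) A (cst k) i) : DigitSeq (relOf (limTruth T)) A (cst k) i := by
  rwa [DigitSeq, hT.rZero_limTruth_iff (rank_cst k i).le,
    hT.rBit_limTruth_iff (rank_cst k i).le (rank_cst k (i + 1)).le]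

end IsHenkinChain

/-! ### Binary digits in the limit -/

/-- The formula saying that the variable `0` is half the variable `1`, rounded down. -/
def fHalf : RelFormula := or (fBit false 1 0) (fBit true 1 0)

/-- Iterated halves of `d`, rounded down. The half of `x` is the witness of stage `k` against the
formula saying that no element is half of `x`. -/
def halves (k d : ℕ) : ℕ → ℕ
  | 0 => d
  | i + 1 => wit k (neg fHalf).code [halves k d i]

theorem rank_halves (d i : ℕ) : rank (halves (rank d) d i) = rank d := by
  cases i with
  | zero => rfl
  | succ i => exact rank_wit _ _ _

theorem primrec_halves (k d : ℕ) : Primrec (halves k d) := by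
  have hstep : Primrec₂ fun (_ : ℕ) (x : ℕ) => wit k (neg fHalf).code [x] :=
    primrec_wit k (Primrec.const _) (primrec_cons Primrec.snd (Primrec.const []))
  refine (Primrec.nat_rec₁ d hstep).of_eq fun i => ?_
  induction i with
  | zero => rfl
  | succ i ih => simp only [halves, ih]

theorem IsHenkin.rBit_halves {k : ℕ} {T : RelFormula → List ℕ → Prop} (hT : IsHenkin k T)
    (d i : ℕ) : rBit (relOf T) false (halves k d i) (halves k d (i + 1)) ∨
      rBit (relOf T) true (halves k d i) (halves k d (i + 1)) := by
  have hneg : ∀ x y, T (neg fHalf) [y, x] ↔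
      ¬ (rBit (relOf T) false x y ∨ rBit (relOf T) true x y) := fun x y => by
    rw [hT.isTarski.iff_sat, sat_neg, fHalf, sat_or, sat_fBit, sat_fBit]
    rfl
  by_contra h
  obtain ⟨y, hy⟩ := hT.isPAPresentation.exists_rBit (halves k d i)
  have hall : T (all (neg fHalf)) [halves k d i] := hT.all_of_wit _ _ ((hneg _ _).2 h)
  exact (hneg _ y).1 (hT.of_all _ y _ hall) hy

theorem ScottSet.setOf_rBit_halves_mem {S : Set (Set ℕ)} {A P : Set ℕ} {k : ℕ} (hS : ScottSet S)
    (hP : IsStage S A k P) (d : ℕ) :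
    {i | rBit (relOf (truth (chi P))) true (halves k d i) (halves k d (i + 1))} ∈ S := by
  let g (i : ℕ) := pos (fBit true 0 1).code [halves k d i, halves k d (i + 1)]
  have hg : Primrec g := primrec_pos (Primrec.const _)
    (primrec_pair (primrec_halves k d) ((primrec_halves k d).comp Primrec.succ))
  refine hS.2.1.2 P hP.mem _ ?_
  convert turingLE_preimage (X := P) hg using 1
  ext i
  have h := hP.isHenkin.isTarski.iff_sat (fBit true 0 1) [halves k d i, halves k d (i + 1)]
  rw [sat_fBit] at h
  refine h.symm.trans ?_
  simp [truth, chi, g]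

/-! ### Models of Scott sets -/

theorem ScottSet.exists_isPAPresentation {S : Set (Set ℕ)} (hS : ScottSet S) (hc : S.Countable) :
    ∃ R : ℕ → ℕ → ℕ → ℕ → Prop, IsPAPresentation R ∧
      (∀ A ∈ S, ∃ q : ℕ → ℕ, ∀ i, DigitSeq R A q i) ∧
      ∀ d, ∃ q : ℕ → ℕ, q 0 = d ∧ ∃ X ∈ S, ∀ i, rBit R (chi X i) (q i) (q (i + 1)) := by
  obtain ⟨A, hA⟩ := hc.exists_eq_range hS.1
  obtain ⟨P, hP, hT⟩ := hS.exists_isHenkinChain (A := A) fun k => hA ▸ Set.mem_range_self k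
  refine ⟨_, hT.isPAPresentation_limTruth, fun B hB => ?_, fun d => ?_⟩
  · rw [hA] at hB
    obtain ⟨k, rfl⟩ := hB
    exact ⟨cst k, fun i => hT.digitSeq_limTruth ((hP k).digitSeq i)⟩
  · refine ⟨halves (rank d) d, rfl, _, hS.setOf_rBit_halves_mem (hP (rank d)) d, fun i => ?_⟩
    rw [hT.rBit_limTruth_iff (rank_halves d i).le (rank_halves d (i + 1)).le]
    by_cases h : rBit (relOf (truth (chi (P (rank d))))) true (halves (rank d) d i)
      (halves (rank d) d (i + 1))
    · simp [chi, h]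
    · simpa [chi, h] using ((hP (rank d)).isHenkin.rBit_halves d i).resolve_right h

open PAModel in
theorem ScottSet.exists_model {S : Set (Set ℕ)} (hS : ScottSet S) (hc : S.Countable) :
    ∃ (M : Type) (_ : arith.Structure M) (_ : PAModel M), IsPAModel M ∧ Countable M ∧
      (∀ A ∈ S, ∃ q : ℕ → M, (∀ i, q i ≠ 0) ∧ ∀ i, DigitStep (i ∈ A) (q i) (q (i + 1))) ∧
      ∀ x : M, ∃ q : ℕ → M, q 0 = x ∧ ∃ A ∈ S, ∀ i, DigitStep (i ∈ A) (q i) (q (i + 1)) := by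
  obtain ⟨R, hR, hdigit, hexp⟩ := hS.exists_isPAPresentation hc
  have h := hR.presents_toModel
  have := hR.paModel
  refine ⟨hR.Model, inferInstance, hR.paModel, h.isPAModel hR, inferInstance, fun A hA => ?_,
    fun x => ?_⟩
  · obtain ⟨q, hq⟩ := hdigit A hA
    refine ⟨fun i => hR.toModel (q i), fun i hi => (hq i).1 ?_, fun i => ?_⟩
    · exact (h.zero_iff _).1 hi.symm
    · exact (h.digitStep_iff A i _ _).2 (hq i).2
  · obtain ⟨d, rfl⟩ := h.surjective x
    obtain ⟨q, rfl, A, hA, hq⟩ := hexp d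
    exact ⟨fun i => hR.toModel (q i), rfl, A, hA, fun i => (h.digitStep_iff A i _ _).2 (hq i)⟩

end Arith

open Arith in
/-- **Scott's characterization.** A countable collection `S` of subsets of `ℕ` is a
Scott set iff `S` is the standard system of some countable non-standard model of `PA`. -/
theorem statement_1 (S : Set (Set ℕ)) (hS : S.Countable) :
    ScottSet S ↔
      ∃ (M : Type) (_ : arith.Structure M),
        NonstandardModel M ∧ Countable M ∧ SSy M = S := by
  constructor
  · intro h
    obtain ⟨M, _, _, hPA, hM, hdigit, hexp⟩ := h.exists_model hS
    obtain ⟨q₀, hne, h₀⟩ := hdigit ∅ h.empty_mem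
    refine ⟨M, _, ⟨hPA, exists_not_isStd_iff.1 ⟨q₀ 0, not_isStd_of_digits h₀ hne⟩⟩, hM,
      Set.Subset.antisymm ?_ fun X hX => ?_⟩
    · rintro X ⟨a, -, hX⟩
      obtain ⟨q, rfl, A, hA, hq⟩ := hexp a
      rwa [show X = A from Set.ext fun i => (hX i).trans (digitB_iff_mem hq i)]
    · obtain ⟨q, hq, hstep⟩ := hdigit X hX
      exact mem_SSy_of_digits hstep hq
  · rintro ⟨M, _, hM, -, rfl⟩
    have := hM.1.paModel
    obtain ⟨a, ha⟩ := exists_not_isStd_iff.2 hM.2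
    exact scottSet_SSy ha
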